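/- arXiv:1603.02328 — 2 statements merged into one kernel-verified Lean document; each statement's English description precedes it below -/
import Mathlib

section
/- Let F be the free group of finite rank q on the basis x₁, …, x_q. Then the automorphism group Aut(F) is generated by the elementary Nielsen transformation automorphisms: for each i, the automorphism sending x_i ↦ x_i⁻¹ and fixing x_k for k ≠ i, and for each pair i ≠ j, the automorphism sending x_i ↦ x_i x_j and fixing x_k for k ≠ i. That is, the subgroup of Aut(F) generated by these automorphisms is all of Aut(F). -/
/-!
Nielsen's cancellation method. For an automorphism `φ`, compose on the right with elementary Nielsen
automorphisms so as to minimise the total weight of the images `φ xᵢ`, where the weight refines the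
word length. At a minimum, at most half of a letter's image is lost to cancellation against either
neighbour in a reduced word, and the tie-breaking in the weight rules out that the image is used up
by losing exactly half on both sides. Hence some part of every image survives, so `φ` does not
decrease length; since `φ` is surjective, `φ⁻¹ xᵢ` then has length one for every `i`. Thus `φ⁻¹`
permutes the letters `xᵢ^{±1}`, and such an automorphism is visibly a product of elementary ones.
-/

namespace NielsenReduction

open FreeGroup hiding map_mul map_inv

section GromovProduct

variable {α : Type*}

theorem isReduced_invRev {L : List (α × Bool)} (hL : IsReduced L) : IsReduced (invRev L) := by
  classical
  rw [isReduced_iff_reduce_eq] at hL ⊢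
  rw [reduce_invRev, hL]

theorem exists_common_prefix_isReduced {L M : List (α × Bool)} (hL : IsReduced L)
    (hM : IsReduced M) :
    ∃ p a b, L = p ++ a ∧ M = p ++ b ∧ IsReduced (invRev a ++ b) := by
  induction L generalizing M with
  | nil => exact ⟨[], [], M, rfl, rfl, hM⟩
  | cons x L ih =>
    cases M with
    | nil => exact ⟨[], x :: L, [], rfl, rfl, by simpa using isReduced_invRev hL⟩
    | cons y M =>
      by_cases hxy : x = y
      · subst hxy
        obtain ⟨p, a, b, rfl, rfl, hab⟩ := ih hL.of_cons hM.of_cons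
        exact ⟨x :: p, a, b, rfl, rfl, hab⟩
      · refine ⟨[], x :: L, y :: M, rfl, rfl, List.IsChain.append (isReduced_invRev hL) hM ?_⟩
        rintro u hu v hv huv
        obtain rfl : (x.1, !x.2) = u := by simpa [invRev] using hu
        obtain rfl : y = v := by simpa using hv
        exact Bool.not_eq.2 fun h ↦ hxy (Prod.ext huv h)

variable [DecidableEq α]

/-- The Gromov product of two elements of a free group based at `1`, that is, the length of the
longest common prefix of their reduced words. The number of letters that cancel from either factor
in a product `g * h` is `gromovProd g⁻¹ h`. Neither the subtraction nor the division truncates. -/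
def gromovProd (g h : FreeGroup α) : ℕ := (norm g + norm h - norm (g⁻¹ * h)) / 2

theorem exists_common_prefix_toWord (g h : FreeGroup α) :
    ∃ p a b, p.length = gromovProd g h ∧ g.toWord = p ++ a ∧ h.toWord = p ++ b ∧
      (g⁻¹ * h).toWord = invRev a ++ b := by
  obtain ⟨p, a, b, hg, hh, hab⟩ :=
    exists_common_prefix_isReduced (isReduced_toWord (x := g)) (isReduced_toWord (x := h))
  have hgh : (g⁻¹ * h).toWord = invRev a ++ b := by
    rw [← hab.reduce_eq, ← toWord_mk, toWord_inj, ← mk_toWord (x := g), ← mk_toWord (x := h),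
      hg, hh, ← mul_mk, ← mul_mk, ← mul_mk, ← inv_mk]
    group
  refine ⟨p, a, b, ?_, hg, hh, hgh⟩
  simp only [gromovProd, FreeGroup.norm, hg, hh, hgh, List.length_append, invRev_length]
  omega

theorem norm_inv_mul_add (g h : FreeGroup α) :
    norm (g⁻¹ * h) + 2 * gromovProd g h = norm g + norm h := by
  obtain ⟨p, a, b, hp, hg, hh, hgh⟩ := exists_common_prefix_toWord g h
  simp only [← hp, FreeGroup.norm, hg, hh, hgh, List.length_append, invRev_length]
  omega

theorem norm_mul_add (g h : FreeGroup α) :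
    norm (g * h) + 2 * gromovProd g⁻¹ h = norm g + norm h := by
  simpa using norm_inv_mul_add g⁻¹ h

theorem gromovProd_comm (g h : FreeGroup α) : gromovProd g h = gromovProd h g := by
  rw [gromovProd, gromovProd, ← norm_inv_eq (x := g⁻¹ * h), mul_inv_rev, inv_inv, add_comm]

theorem gromovProd_self (g : FreeGroup α) : gromovProd g g = norm g := by
  have := norm_inv_mul_add g g
  rw [inv_mul_cancel, FreeGroup.norm_one] at this
  omega

theorem gromovProd_mul_self_add (g h : FreeGroup α) :
    gromovProd (g * h) g + gromovProd g⁻¹ h = norm g := by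
  have h₁ := norm_mul_add g h
  have h₂ := norm_inv_mul_add (g * h) g
  rw [mul_inv_rev, inv_mul_cancel_right, norm_inv_eq] at h₂
  omega

theorem length_le_gromovProd {g h : FreeGroup α} {p : List (α × Bool)} (hg : p <+: g.toWord)
    (hh : p <+: h.toWord) : p.length ≤ gromovProd g h := by
  obtain ⟨a, ha⟩ := hg
  obtain ⟨b, hb⟩ := hh
  have hgh : g⁻¹ * h = mk (invRev a ++ b) := by
    rw [← mk_toWord (x := g), ← mk_toWord (x := h), ← ha, ← hb, ← mul_mk, ← mul_mk, ← mul_mk,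
      ← inv_mk]
    group
  have hle : norm (g⁻¹ * h) ≤ a.length + b.length := by
    rw [hgh]
    exact norm_mk_le.trans_eq (by rw [List.length_append, invRev_length])
  have hsum := norm_inv_mul_add g h
  simp only [FreeGroup.norm, ← ha, ← hb, List.length_append] at hle hsum
  omega

theorem exists_prefix_length_eq_gromovProd (g h : FreeGroup α) :
    ∃ p, p <+: g.toWord ∧ p <+: h.toWord ∧ p.length = gromovProd g h := by
  obtain ⟨p, a, b, hp, hg, hh, -⟩ := exists_common_prefix_toWord g h
  exact ⟨p, ⟨a, hg.symm⟩, ⟨b, hh.symm⟩, hp⟩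

/-- `FreeGroup α` is `0`-hyperbolic. -/
theorem min_gromovProd_le (g h k : FreeGroup α) :
    min (gromovProd g h) (gromovProd h k) ≤ gromovProd g k := by
  obtain ⟨p, hpg, hph, hp⟩ := exists_prefix_length_eq_gromovProd g h
  obtain ⟨q, hqh, hqk, hq⟩ := exists_prefix_length_eq_gromovProd h k
  rw [← hp, ← hq, min_le_iff]
  rcases List.prefix_or_prefix_of_prefix hph hqh with hpq | hqp
  · exact .inl (length_le_gromovProd hpg (hpq.trans hqk))
  · exact .inr (length_le_gromovProd (hqp.trans hpg) hqk)

theorem norm_lt_norm_mul_self {g : FreeGroup α} (hg : g ≠ 1) : norm g < norm (g * g) := by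
  set c := reduceCyclically.conjugator g.toWord
  set r := reduceCyclically g.toWord
  have hword : c ++ r ++ invRev c = g.toWord :=
    reduceCyclically.conj_conjugator_reduceCyclically g.toWord
  have hsq : (g * g).toWord = c ++ (r ++ r) ++ invRev c := by
    simpa [← sq, toWord_pow, List.replicate_succ] using
      reduceCyclically.reduce_flatten_replicate_succ (isReduced_toWord (x := g)) 1
  have hr : r ≠ [] := by
    intro hr
    apply hg
    rw [← mk_toWord (x := g), ← hword, hr, List.append_nil, ← mul_mk, ← inv_mk, mul_inv_cancel]
  have hpos := List.length_pos_iff.2 hr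
  simp only [FreeGroup.norm, hsq, ← hword, List.length_append]
  omega

end GromovProduct

section Weight

variable {α : Type*} [Fintype α]

variable (α) in
/-- The base in which `wordValue` reads words over `α × Bool` as numbers. It exceeds every digit,
and is greater than one even if `α` is empty. -/
def wordBase : ℕ := Fintype.card (α × Bool) + 2

/-- The digits of a word, least significant first as in `Nat.ofDigits`. They are nonzero, so that a
longer word has a larger value. -/
noncomputable def wordDigits (L : List (α × Bool)) : List ℕ :=
  (L.map fun x ↦ (Fintype.equivFin (α × Bool) x : ℕ) + 1).reverse

/-- The number represented by a word whose letters are read as nonzero digits in base `wordBase α`,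
the first letter being the most significant. It encodes the length-lexicographic order. -/
noncomputable def wordValue (L : List (α × Bool)) : ℕ := Nat.ofDigits (wordBase α) (wordDigits L)

theorem one_lt_wordBase : 1 < wordBase α := by simp [wordBase]

theorem length_wordDigits (L : List (α × Bool)) : (wordDigits L).length = L.length := by
  simp [wordDigits]

theorem lt_wordBase_of_mem_wordDigits {L : List (α × Bool)} {n : ℕ} (hn : n ∈ wordDigits L) :
    n < wordBase α := by
  simp only [wordDigits, List.mem_reverse, List.mem_map] at hn
  obtain ⟨x, -, rfl⟩ := hn
  have := (Fintype.equivFin (α × Bool) x).isLt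
  rw [wordBase]
  omega

theorem wordValue_append (L M : List (α × Bool)) :
    wordValue (L ++ M) = wordValue L * wordBase α ^ M.length + wordValue M := by
  simp only [wordValue, wordDigits, List.map_append, List.reverse_append, Nat.ofDigits_append,
    List.length_reverse, List.length_map]
  ring

theorem wordValue_lt_pow_length (L : List (α × Bool)) : wordValue L < wordBase α ^ L.length := by
  rw [← length_wordDigits]
  exact Nat.ofDigits_lt_base_pow_length one_lt_wordBase fun _ ↦ lt_wordBase_of_mem_wordDigits

theorem pow_length_le_wordValue_cons (x : α × Bool) (L : List (α × Bool)) :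
    wordBase α ^ L.length ≤ wordValue (x :: L) := by
  rw [← List.singleton_append, wordValue_append]
  refine le_add_right (Nat.le_mul_of_pos_left _ ?_)
  simp [wordValue, wordDigits]

theorem wordValue_lt_of_length_lt {L M : List (α × Bool)} (h : L.length < M.length) :
    wordValue L < wordValue M := by
  cases M with
  | nil => simp at h
  | cons x M =>
    calc
      wordValue L < wordBase α ^ L.length := wordValue_lt_pow_length L
      _ ≤ wordBase α ^ M.length :=
        Nat.pow_le_pow_right one_lt_wordBase.le (Nat.le_of_lt_succ h)
      _ ≤ wordValue (x :: M) := pow_length_le_wordValue_cons x M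

theorem eq_of_wordValue_eq {L M : List (α × Bool)} (hlen : L.length = M.length)
    (h : wordValue L = wordValue M) : L = M := by
  have hdigits := Nat.ofDigits_inj_of_len_eq one_lt_wordBase
    (by rw [length_wordDigits, length_wordDigits, hlen])
    (fun _ ↦ lt_wordBase_of_mem_wordDigits) (fun _ ↦ lt_wordBase_of_mem_wordDigits) h
  refine List.map_injective_iff.2 (fun x y hxy ↦ ?_) (List.reverse_injective hdigits)
  simpa [Fin.val_inj] using hxy

theorem wordValue_append_add_pow_le {L M : List (α × Bool)} (h : wordValue L < wordValue M)
    (S : List (α × Bool)) :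
    wordValue (L ++ S) + wordBase α ^ S.length ≤ wordValue (M ++ S) := by
  have hmul := Nat.mul_le_mul_right (wordBase α ^ S.length) (Nat.succ_le_of_lt h)
  rw [Nat.succ_mul] at hmul
  rw [wordValue_append, wordValue_append]
  omega

theorem wordValue_append_lt {L S T : List (α × Bool)} (h : S.length = T.length) :
    wordValue (L ++ S) < wordValue (L ++ T) + wordBase α ^ T.length := by
  have hS := wordValue_lt_pow_length S
  rw [wordValue_append, wordValue_append, ← h]
  omega

theorem wordValue_le_of_append_le_append {L M S T : List (α × Bool)} (hlen : S.length = T.length)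
    (h : wordValue (L ++ S) ≤ wordValue (M ++ T)) : wordValue L ≤ wordValue M := by
  by_contra! hlt
  have h₁ := wordValue_append_add_pow_le hlt S
  have h₂ := wordValue_append_lt (L := M) hlen.symm
  omega

variable [DecidableEq α]

/-- A refinement of the norm on a free group of finite rank, in which the values of the reduced
words of an element and of its inverse break ties. Using both makes it invariant under inversion. -/
noncomputable def weight (g : FreeGroup α) : ℕ := wordValue g.toWord + wordValue g⁻¹.toWord

theorem weight_inv (g : FreeGroup α) : weight g⁻¹ = weight g := by
  rw [weight, weight, inv_inv, add_comm]

theorem weight_lt_of_norm_lt {g h : FreeGroup α} (hlt : norm g < norm h) :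
    weight g < weight h := by
  have hlt' : norm g⁻¹ < norm h⁻¹ := by rwa [norm_inv_eq, norm_inv_eq]
  exact add_lt_add (wordValue_lt_of_length_lt hlt) (wordValue_lt_of_length_lt hlt')

theorem eq_one_of_wordValue_inv_eq {g : FreeGroup α}
    (h : wordValue g⁻¹.toWord = wordValue g.toWord) : g = 1 :=
  inv_eq_self.1 (toWord_injective (eq_of_wordValue_eq norm_inv_eq h))

theorem wordValue_invRev_lt_of_toWord_eq_append {h : FreeGroup α} {p b : List (α × Bool)}
    (hh : h.toWord = p ++ b) (hlen : b.length = p.length)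
    (hval : wordValue h⁻¹.toWord < wordValue h.toWord) : wordValue (invRev b) < wordValue p := by
  rw [toWord_inv, hh, invRev_append] at hval
  refine lt_of_le_of_ne ?_ fun heq ↦ hval.ne ?_
  · exact wordValue_le_of_append_le_append (by rw [invRev_length, hlen]) hval.le
  · rw [← eq_of_wordValue_eq (by rw [invRev_length, hlen]) heq, invRev_invRev]

/-- The product replaces the first half of `h` at the start of `g` by the inverse of the second
half, which lowers the most significant digits of `g`. -/
theorem weight_inv_mul_lt {g h : FreeGroup α} (hcancel : 2 * gromovProd g h = norm h)
    (hle : norm h ≤ norm g) (hval : wordValue h⁻¹.toWord < wordValue h.toWord) :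
    weight (g⁻¹ * h) < weight g := by
  obtain ⟨p, a, b, hp, hg, hh, hgh⟩ := exists_common_prefix_toWord g h
  have hbp : b.length = p.length := by
    simp only [← hp, FreeGroup.norm, hh, List.length_append] at hcancel
    omega
  have hpa : p.length ≤ a.length := by
    simp only [FreeGroup.norm, hg, hh, List.length_append] at hle
    omega
  have hgain : wordValue (invRev b ++ a) + wordBase α ^ a.length ≤ wordValue (p ++ a) :=
    wordValue_append_add_pow_le (wordValue_invRev_lt_of_toWord_eq_append hh hbp hval) a
  have hloss : wordValue (invRev a ++ b) <
      wordValue (invRev a ++ invRev p) + wordBase α ^ p.length := by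
    simpa using wordValue_append_lt (L := invRev a) (S := b) (T := invRev p) (by simpa using hbp)
  have hpow : wordBase α ^ p.length ≤ wordBase α ^ a.length :=
    Nat.pow_le_pow_right one_lt_wordBase.le hpa
  simp only [weight, toWord_inv _, hgh, hg, invRev_append, invRev_invRev]
  omega

theorem two_mul_gromovProd_le_of_weight_le {g h : FreeGroup α}
    (hmin : weight g ≤ weight (g * h)) : 2 * gromovProd g⁻¹ h ≤ norm h := by
  have hle := le_of_not_gt (mt weight_lt_of_norm_lt hmin.not_gt)
  have hsum := norm_mul_add g h
  omega

theorem wordValue_le_of_weight_le {g h : FreeGroup α} (hmin : weight g ≤ weight (g * h))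
    (hcancel : 2 * gromovProd g⁻¹ h = norm h) (hle : norm h ≤ norm g) :
    wordValue h.toWord ≤ wordValue h⁻¹.toWord := by
  by_contra! hval
  have hlt := weight_inv_mul_lt hcancel (by rwa [norm_inv_eq]) hval
  rw [inv_inv, weight_inv] at hlt
  exact hmin.not_gt hlt

theorem gromovProd_add_gromovProd_lt_norm {x y z : FreeGroup α} (hy : y ≠ 1)
    (hxy : weight x ≤ weight (x * y)) (hyx : weight y⁻¹ ≤ weight (y⁻¹ * x⁻¹))
    (hyz : weight y ≤ weight (y * z)) (hzy : weight z⁻¹ ≤ weight (z⁻¹ * y⁻¹)) :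
    gromovProd x⁻¹ y + gromovProd y⁻¹ z < norm y := by
  have hcxy := two_mul_gromovProd_le_of_weight_le hxy
  have hcyx := two_mul_gromovProd_le_of_weight_le hyx
  have hcyz := two_mul_gromovProd_le_of_weight_le hyz
  have hczy := two_mul_gromovProd_le_of_weight_le hzy
  rw [inv_inv, gromovProd_comm, norm_inv_eq] at hcyx hczy
  by_contra! hge
  have hval : wordValue y.toWord ≤ wordValue y⁻¹.toWord :=
    wordValue_le_of_weight_le hxy (by omega) (by omega)
  have hval' : wordValue y⁻¹.toWord ≤ wordValue y.toWord := by
    have := wordValue_le_of_weight_le hzy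
      (by rw [inv_inv, gromovProd_comm, norm_inv_eq]; omega)
      (by rw [norm_inv_eq, norm_inv_eq]; omega)
    rwa [inv_inv] at this
  exact hy (eq_one_of_wordValue_inv_eq (hval'.antisymm hval))

end Weight

section Letters

variable {α : Type*}

theorem mk_singleton_eq_or (a : α × Bool) : mk [a] = of a.1 ∨ mk [a] = (of a.1)⁻¹ := by
  obtain ⟨i, _ | _⟩ := a
  · exact .inr rfl
  · exact .inl rfl

theorem inv_mk_singleton (a : α × Bool) : (mk [a])⁻¹ = mk [(a.1, !a.2)] := rfl

theorem isReduced_pair_inv {a b : α × Bool} (h : IsReduced [a, b]) :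
    IsReduced [(b.1, !b.2), (a.1, !a.2)] :=
  isReduced_invRev h

theorem mk_singleton_ne_one (a : α × Bool) : mk [a] ≠ 1 := by
  rcases mk_singleton_eq_or a with h | h <;> simp [h]

theorem exists_eq_mk_singleton_of_norm_eq_one [DecidableEq α] {g : FreeGroup α}
    (hg : norm g = 1) : ∃ a, g = mk [a] := by
  obtain ⟨a, ha⟩ := List.length_eq_one_iff.1 hg
  exact ⟨a, by rw [← ha, mk_toWord]⟩

end Letters

section Cores

variable {ι α : Type*} [DecidableEq α] {φ : FreeGroup ι →* FreeGroup α}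

/-- In every reduced word `abc` of letters, a nonempty middle part (the *core*) of `φ b` survives
the cancellation against `φ a` and `φ c`. This is the property of Nielsen reduced systems that
controls lengths; taking `a = b = c` shows that it includes `φ b ≠ 1`. -/
def HasNontrivialCores (φ : FreeGroup ι →* FreeGroup α) : Prop :=
  ∀ a b c, IsReduced [a, b] → IsReduced [b, c] →
    gromovProd (φ (mk [a]))⁻¹ (φ (mk [b])) + gromovProd (φ (mk [b]))⁻¹ (φ (mk [c])) <
      norm (φ (mk [b]))

/-- The first conjunct says that prepending a letter only cancels against the image of the first
letter `a`, and is what makes the induction go through. -/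
theorem HasNontrivialCores.gromovProd_lt_and_length_add_le (hφ : HasNontrivialCores φ)
    {a : ι × Bool} {L : List (ι × Bool)} (hL : IsReduced (a :: L)) :
    (∀ b, IsReduced [b, a] →
      gromovProd (φ (mk [b]))⁻¹ (φ (mk [a])) < gromovProd (φ (mk (a :: L))) (φ (mk [a]))) ∧
    L.length + gromovProd (φ (mk (a :: L))) (φ (mk [a])) ≤ norm (φ (mk (a :: L))) := by
  induction L generalizing a with
  | nil =>
    rw [gromovProd_self, List.length_nil, zero_add]
    exact ⟨fun b hb ↦ by have := hφ b a a hb (by simp); omega, le_rfl⟩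
  | cons c L ih =>
    obtain ⟨hac', hcL⟩ := isReduced_cons_cons.1 hL
    have hac : IsReduced [a, c] := by simpa using hac'
    obtain ⟨ih_lt, ih_le⟩ := ih hcL
    have hlt := ih_lt a hac
    have hcore (b : ι × Bool) (hb : IsReduced [b, a]) := hφ b a c hb hac
    set x := φ (mk [a])
    set y := φ (mk (c :: L))
    have hxy : φ (mk (a :: c :: L)) = x * y := by
      rw [← List.singleton_append, ← mul_mk, map_mul]
    have hcancel : gromovProd x⁻¹ y ≤ gromovProd x⁻¹ (φ (mk [c])) := by
      have := min_gromovProd_le x⁻¹ y (φ (mk [c]))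
      omega
    have hkeep := gromovProd_mul_self_add x y
    have hnorm := norm_mul_add x y
    rw [hxy, List.length_cons]
    refine ⟨fun b hb ↦ ?_, by omega⟩
    have := hcore b hb
    omega

theorem HasNontrivialCores.length_le_norm_map_mk (hφ : HasNontrivialCores φ)
    {L : List (ι × Bool)} (hL : IsReduced L) : L.length ≤ norm (φ (mk L)) := by
  cases L with
  | nil => simp
  | cons a L =>
    obtain ⟨hlt, hle⟩ := hφ.gromovProd_lt_and_length_add_le hL
    have := hlt a (by simp)
    rw [List.length_cons]
    omega

theorem HasNontrivialCores.norm_le_norm_map [DecidableEq ι] (hφ : HasNontrivialCores φ)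
    (g : FreeGroup ι) : norm g ≤ norm (φ g) :=
  (hφ.length_le_norm_map_mk isReduced_toWord).trans_eq (by rw [mk_toWord])

variable [Fintype α]

/-- No elementary Nielsen transformation of the tuple `φ xᵢ` lowers the weight of the entry it
changes. The entries and their inverses are both of the form `φ (mk [a])`. -/
def IsWeightMinimal (φ : FreeGroup ι →* FreeGroup α) : Prop :=
  ∀ a b : ι × Bool, a.1 ≠ b.1 → weight (φ (mk [a])) ≤ weight (φ (mk [a]) * φ (mk [b]))

theorem IsWeightMinimal.weight_le_mul (hφ : IsWeightMinimal φ) {a b : ι × Bool}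
    (hab : IsReduced [a, b]) :
    weight (φ (mk [a])) ≤ weight (φ (mk [a]) * φ (mk [b])) := by
  by_cases hfst : a.1 = b.1
  · obtain rfl : a = b := Prod.ext hfst ((isReduced_cons_cons.1 hab).1 hfst)
    rcases eq_or_ne (φ (mk [a])) 1 with h | h
    · rw [h, mul_one]
    · exact (weight_lt_of_norm_lt (norm_lt_norm_mul_self h)).le
  · exact hφ a b hfst

theorem IsWeightMinimal.hasNontrivialCores (hφ : IsWeightMinimal φ)
    (hne : ∀ a, φ (mk [a]) ≠ 1) : HasNontrivialCores φ := by
  have hinv {a b : ι × Bool} (hab : IsReduced [a, b]) :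
      weight (φ (mk [b]))⁻¹ ≤ weight ((φ (mk [b]))⁻¹ * (φ (mk [a]))⁻¹) := by
    simpa only [← inv_mk_singleton, map_inv] using
      hφ.weight_le_mul (isReduced_pair_inv hab)
  exact fun a b c hab hbc ↦ gromovProd_add_gromovProd_lt_norm (hne b) (hφ.weight_le_mul hab)
    (hinv hab) (hφ.weight_le_mul hbc) (hinv hbc)

end Cores

section Nielsen

variable {α : Type*}

variable (α) in
/-- The elementary Nielsen automorphisms: inversion of one generator, and right multiplication of
one generator by another. -/
def elementaryNielsen : Set (MulAut (FreeGroup α)) :=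
  { φ | (∃ i, φ (of i) = (of i)⁻¹ ∧ ∀ k, k ≠ i → φ (of k) = of k) ∨
    ∃ i j, i ≠ j ∧ φ (of i) = of i * of j ∧ ∀ k, k ≠ i → φ (of k) = of k }

variable (α) in
/-- The group generated by the elementary Nielsen automorphisms. -/
def nielsenSubgroup : Subgroup (MulAut (FreeGroup α)) := Subgroup.closure (elementaryNielsen α)

theorem mulAut_ext_of {φ ψ : MulAut (FreeGroup α)} (h : ∀ k, φ (of k) = ψ (of k)) : φ = ψ :=
  MulEquiv.toMonoidHom_injective (ext_hom _ _ h)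

/-- The automorphism inverting the generator `i`. -/
def invertGen [DecidableEq α] (i : α) : MulAut (FreeGroup α) :=
  MonoidHom.toMulEquiv (lift (Function.update of i (of i)⁻¹))
    (lift (Function.update of i (of i)⁻¹))
    (by ext k; by_cases h : k = i <;> simp [h])
    (by ext k; by_cases h : k = i <;> simp [h])

theorem invertGen_of [DecidableEq α] (i k : α) :
    invertGen i (of k) = if k = i then (of i)⁻¹ else of k := by
  simp [invertGen, Function.update_apply]

theorem invertGen_mem [DecidableEq α] (i : α) : invertGen i ∈ nielsenSubgroup α :=
  Subgroup.subset_closure <| .inl ⟨i, by simp [invertGen_of],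
    fun k hk ↦ by simp [invertGen_of, hk]⟩

/-- The automorphism multiplying the generator `i` by the generator `j` on the right. -/
def mulGen [DecidableEq α] {i j : α} (hij : i ≠ j) : MulAut (FreeGroup α) :=
  MonoidHom.toMulEquiv (lift (Function.update of i (of i * of j)))
    (lift (Function.update of i (of i * (of j)⁻¹)))
    (by ext k; by_cases h : k = i <;> simp [h, hij.symm])
    (by ext k; by_cases h : k = i <;> simp [h, hij.symm])

theorem mulGen_of [DecidableEq α] {i j : α} (hij : i ≠ j) (k : α) :
    mulGen hij (of k) = if k = i then of i * of j else of k := by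
  simp [mulGen, Function.update_apply]

theorem mulGen_symm_of [DecidableEq α] {i j : α} (hij : i ≠ j) (k : α) :
    (mulGen hij).symm (of k) = if k = i then of i * (of j)⁻¹ else of k := by
  simp [mulGen, Function.update_apply]

theorem mulGen_mem [DecidableEq α] {i j : α} (hij : i ≠ j) : mulGen hij ∈ nielsenSubgroup α :=
  Subgroup.subset_closure <| .inr ⟨i, j, hij, by simp [mulGen_of],
    fun k hk ↦ by simp [mulGen_of, hk]⟩

theorem exists_mem_nielsenSubgroup_map_of_eq_mk_singleton (a : α × Bool) :
    ∃ ν ∈ nielsenSubgroup α, ν (of a.1) = mk [a] ∧ ∀ k, k ≠ a.1 → ν (of k) = of k := by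
  classical
  rcases mk_singleton_eq_or a with h | h
  · exact ⟨1, one_mem _, by simp [h], by simp⟩
  · exact ⟨invertGen a.1, invertGen_mem _, by simp [h, invertGen_of],
      fun k hk ↦ by simp [invertGen_of, hk]⟩

theorem exists_mem_nielsenSubgroup_map_of_eq_of_mul_mk {i : α} {b : α × Bool} (hib : i ≠ b.1) :
    ∃ ν ∈ nielsenSubgroup α, ν (of i) = of i * mk [b] ∧ ∀ k, k ≠ i → ν (of k) = of k := by
  classical
  rcases mk_singleton_eq_or b with h | h
  · exact ⟨mulGen hib, mulGen_mem _, by simp [h, mulGen_of], fun k hk ↦ by simp [mulGen_of, hk]⟩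
  · exact ⟨(mulGen hib)⁻¹, inv_mem (mulGen_mem _), by simp [h, mulGen_symm_of],
      fun k hk ↦ by simp [mulGen_symm_of, hk]⟩

theorem exists_mem_nielsenSubgroup_map_of_eq_mk_mul_mk {a b : α × Bool} (hab : a.1 ≠ b.1) :
    ∃ ν ∈ nielsenSubgroup α,
      ν (of a.1) = mk [a] * mk [b] ∧ ∀ k, k ≠ a.1 → ν (of k) = of k := by
  obtain ⟨σ, hσ, hσa, hσk⟩ := exists_mem_nielsenSubgroup_map_of_eq_mk_singleton a
  obtain ⟨ρ, hρ, hρa, hρk⟩ := exists_mem_nielsenSubgroup_map_of_eq_of_mul_mk hab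
  have hσb : σ (mk [b]) = mk [b] := by
    rcases mk_singleton_eq_or b with h | h <;> simp [h, hσk _ hab.symm]
  exact ⟨σ * ρ, mul_mem hσ hρ, by simp [hρa, hσa, hσb],
    fun k hk ↦ by simp [hρk k hk, hσk k hk]⟩

theorem freeGroupCongr_swap_mem [DecidableEq α] {i j : α} (hij : i ≠ j) :
    (freeGroupCongr (Equiv.swap i j) : MulAut (FreeGroup α)) ∈ nielsenSubgroup α := by
  have h : (freeGroupCongr (Equiv.swap i j) : MulAut (FreeGroup α)) =
      invertGen i * mulGen hij * invertGen i * mulGen hij.symm * (mulGen hij)⁻¹ * invertGen i := by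
    -- From left to right, the factors turn the pair `(x, y)` of generators `i` and `j` into
    -- `(x⁻¹, y)`, `(x⁻¹y, y)`, `(y⁻¹x, y)`, `(y⁻¹x, x)`, `(y⁻¹, x)`, `(y, x)`.
    refine mulAut_ext_of fun k ↦ ?_
    rcases eq_or_ne k i with rfl | hi
    · simp [mulGen_of, mulGen_symm_of, invertGen_of, hij, hij.symm]
    rcases eq_or_ne k j with rfl | hj
    · simp [mulGen_of, mulGen_symm_of, invertGen_of, hij.symm]
    · simp [mulGen_of, mulGen_symm_of, invertGen_of, hi, hj, Equiv.swap_apply_of_ne_of_ne]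
  have hmul := mulGen_mem hij
  have hinv := invertGen_mem i
  rw [h]
  exact mul_mem (mul_mem (mul_mem (mul_mem (mul_mem hinv hmul) hinv) (mulGen_mem hij.symm))
    (inv_mem hmul)) hinv

theorem freeGroupCongr_mem [Finite α] (σ : Equiv.Perm α) :
    (freeGroupCongr σ : MulAut (FreeGroup α)) ∈ nielsenSubgroup α := by
  classical
  induction σ using Equiv.Perm.swap_induction_on with
  | one =>
    convert one_mem (nielsenSubgroup α)
    exact mulAut_ext_of fun k ↦ by simp
  | swap_mul f i j hij ih =>
    convert mul_mem (freeGroupCongr_swap_mem hij) ih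
    exact mulAut_ext_of fun k ↦ by simp

theorem mem_nielsenSubgroup_of_inverts_finset (s : Finset α) (φ : MulAut (FreeGroup α))
    (hinv : ∀ k ∈ s, φ (of k) = (of k)⁻¹) (hfix : ∀ k ∉ s, φ (of k) = of k) :
    φ ∈ nielsenSubgroup α := by
  classical
  induction s using Finset.induction_on generalizing φ with
  | empty =>
    convert one_mem (nielsenSubgroup α)
    exact mulAut_ext_of fun k ↦ by simp [hfix]
  | insert i s hi ih =>
    rw [← Subgroup.mul_mem_cancel_right _ (invertGen_mem i)]
    refine ih _ (fun k hk ↦ ?_) fun k hk ↦ ?_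
    · have hki : k ≠ i := ne_of_mem_of_not_mem hk hi
      simp [invertGen_of, hki, hinv k (Finset.mem_insert_of_mem hk)]
    · rcases eq_or_ne k i with rfl | hki
      · simp [invertGen_of, hinv k (Finset.mem_insert_self k s)]
      · simp [invertGen_of, hki, hfix k (by simp [hki, hk])]

theorem mem_nielsenSubgroup_of_map_of_eq_or_inv [Finite α] (φ : MulAut (FreeGroup α))
    (h : ∀ k, φ (of k) = of k ∨ φ (of k) = (of k)⁻¹) : φ ∈ nielsenSubgroup α := by
  have hs : {k | φ (of k) = (of k)⁻¹}.Finite := Set.toFinite _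
  exact mem_nielsenSubgroup_of_inverts_finset hs.toFinset φ
    (fun k hk ↦ by simpa using hk) fun k hk ↦ (h k).resolve_right (by simpa using hk)

theorem injective_fst_of_map_of_eq_mk_singleton {ι : Type*} {φ : FreeGroup ι →* FreeGroup α}
    (hφ : Function.Injective φ) {f : ι → α × Bool} (hf : ∀ k, φ (of k) = mk [f k]) :
    Function.Injective fun k ↦ (f k).1 := by
  classical
  intro k l hkl
  have hmap : φ (of k) = φ (of l) ∨ φ (of k) = φ (of l)⁻¹ := by
    simp only at hkl
    rw [map_inv, hf, hf]
    rcases mk_singleton_eq_or (f k) with hk | hk <;>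
      rcases mk_singleton_eq_or (f l) with hl | hl <;> simp [hk, hl, hkl]
  rcases hmap with h | h
  · exact of_injective (hφ h)
  · simpa [toWord_inv, invRev] using congrArg toWord (hφ h)

theorem mem_nielsenSubgroup_of_map_of_eq_mk_singleton [Finite α] (φ : MulAut (FreeGroup α))
    (h : ∀ k, ∃ a, φ (of k) = mk [a]) : φ ∈ nielsenSubgroup α := by
  choose f hf using h
  have hinj := injective_fst_of_map_of_eq_mk_singleton (φ := φ.toMonoidHom) φ.injective hf
  let σ : Equiv.Perm α := .ofBijective _ (Finite.injective_iff_bijective.1 hinj)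
  rw [← Subgroup.mul_mem_cancel_left _ (freeGroupCongr_mem σ⁻¹)]
  refine mem_nielsenSubgroup_of_map_of_eq_or_inv _ fun k ↦ ?_
  have hσ : σ.symm (f k).1 = k := σ.symm_apply_apply k
  rcases mk_singleton_eq_or (f k) with hk | hk <;> simp [hf, hk, hσ]

variable [Fintype α] [DecidableEq α]

theorem exists_mem_nielsenSubgroup_sum_weight_lt {φ : MulAut (FreeGroup α)}
    (hφ : ¬ IsWeightMinimal φ.toMonoidHom) :
    ∃ ν ∈ nielsenSubgroup α, ∑ k, weight ((φ * ν) (of k)) < ∑ k, weight (φ (of k)) := by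
  simp only [IsWeightMinimal, not_forall, not_le] at hφ
  obtain ⟨a, b, hab, hlt⟩ := hφ
  obtain ⟨ν, hν, hνa, hνk⟩ := exists_mem_nielsenSubgroup_map_of_eq_mk_mul_mk hab
  have hlt' : weight ((φ * ν) (of a.1)) < weight (φ (of a.1)) :=
    calc
      weight ((φ * ν) (of a.1)) = weight (φ (mk [a]) * φ (mk [b])) := by
        rw [MulAut.mul_apply, hνa, map_mul]
      _ < weight (φ (mk [a])) := hlt
      _ = weight (φ (of a.1)) := by
        rcases mk_singleton_eq_or a with h | h <;> simp [h, weight_inv]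
  refine ⟨ν, hν, Finset.sum_lt_sum (fun k _ ↦ ?_) ⟨a.1, Finset.mem_univ _, hlt'⟩⟩
  rcases eq_or_ne k a.1 with rfl | hk
  · exact hlt'.le
  · rw [MulAut.mul_apply, hνk k hk]

theorem exists_mem_nielsenSubgroup_isWeightMinimal_mul (φ : MulAut (FreeGroup α)) :
    ∃ ν ∈ nielsenSubgroup α, IsWeightMinimal (φ * ν).toMonoidHom := by
  obtain ⟨ν, hν, hmin⟩ := exists_minimalFor_of_wellFoundedLT (· ∈ nielsenSubgroup α)
    (fun ν ↦ ∑ k, weight ((φ * ν) (of k))) ⟨1, one_mem _⟩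
  refine ⟨ν, hν, by_contra fun hnot ↦ ?_⟩
  obtain ⟨ρ, hρ, hlt⟩ := exists_mem_nielsenSubgroup_sum_weight_lt hnot
  rw [mul_assoc] at hlt
  exact (hmin (mul_mem hν hρ) hlt.le).not_gt hlt

theorem IsWeightMinimal.mem_nielsenSubgroup {φ : MulAut (FreeGroup α)}
    (hφ : IsWeightMinimal φ.toMonoidHom) : φ ∈ nielsenSubgroup α := by
  have hcores : HasNontrivialCores φ.toMonoidHom :=
    hφ.hasNontrivialCores fun a ↦ (map_ne_one_iff φ φ.injective).2 (mk_singleton_ne_one a)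
  rw [← inv_mem_iff]
  refine mem_nielsenSubgroup_of_map_of_eq_mk_singleton _ fun k ↦
    exists_eq_mk_singleton_of_norm_eq_one (le_antisymm ?_ ?_)
  · calc
      norm (φ⁻¹ (of k)) ≤ norm (φ (φ⁻¹ (of k))) := hcores.norm_le_norm_map _
      _ = 1 := by rw [MulAut.apply_inv_self, norm_of]
  · exact Nat.one_le_iff_ne_zero.2 (by simp)

end Nielsen

end NielsenReduction

open NielsenReduction in
theorem mulAut_freeGroup_generated_by_nielsen_general (α : Type*) [Finite α] :
    Subgroup.closure (elementaryNielsen α) = ⊤ := by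
  classical
  have := Fintype.ofFinite α
  refine (Subgroup.eq_top_iff' (nielsenSubgroup α)).2 fun φ ↦ ?_
  obtain ⟨ν, hν, hmin⟩ := exists_mem_nielsenSubgroup_isWeightMinimal_mul φ
  exact (Subgroup.mul_mem_cancel_right _ hν).1 hmin.mem_nielsenSubgroup

/-- The automorphism group of the free group of finite rank `q` is generated by
the elementary Nielsen transformation automorphisms: for each `i` the
automorphism `xᵢ ↦ xᵢ⁻¹` fixing `x_k` for `k ≠ i` (T1), and for each `i ≠ j`
the automorphism `xᵢ ↦ xᵢ xⱼ` fixing `x_k` for `k ≠ i` (T2). -/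
theorem mulAut_freeGroup_generated_by_nielsen (q : ℕ) :
    Subgroup.closure
      { φ : MulAut (FreeGroup (Fin q)) |
        (∃ i : Fin q, φ (FreeGroup.of i) = (FreeGroup.of i)⁻¹ ∧
          ∀ k : Fin q, k ≠ i → φ (FreeGroup.of k) = FreeGroup.of k) ∨
        (∃ i j : Fin q, i ≠ j ∧
          φ (FreeGroup.of i) = FreeGroup.of i * FreeGroup.of j ∧
          ∀ k : Fin q, k ≠ i → φ (FreeGroup.of k) = FreeGroup.of k) } = ⊤ :=
  mulAut_freeGroup_generated_by_nielsen_general (Fin q)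
end

section
/- Fix q ≥ 3 and let F_q be the free group of rank q. Let P(q,k) denote the number of primitive elements of F_q of free length k. Then there exist constants c₁ > 0 and c₂ > 0 such that for all k ≥ 1: c₁·(2q−3)^k ≤ P(q,k) ≤ c₂·(2q−2)^k. -/
/-- An element `g` of a group `G` is *primitive* if there is a free basis of `G`
containing `g`, i.e. a subset `s ∋ g` which generates `G` and freely generates:
the induced homomorphism from the free group on `s` is injective. -/
def IsPrimitive {G : Type*} [Group G] (g : G) : Prop :=
  ∃ s : Set G, g ∈ s ∧ Subgroup.closure s = ⊤ ∧
    Function.Injective ⇑(FreeGroup.lift (Subtype.val : s → G))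

/-!
A primitive element `g` belongs to a basis with a further element `j`. The set of elements whose
reduced word in this basis ends in `j` is almost invariant, proper, and stable under left
multiplication by `g`. Rewrite it in the standard basis as a set `P`. Almost invariance makes `P`
constant on the cones of reduced words with a given long suffix, so there is a longest suffix `L`
whose cone meets both `P` and its complement; extending `L` by one more letter on the left sorts the
letters into those leading into `P` and those leading outside. If `g` is cyclically reduced,
`g P = P` says that the edges of its Whitehead graph respect this partition, except at the
one letter which may cancel against `L`: that letter is a cut vertex.

Words compatible with a given cut vertex and partition are the paths of a transition matrix, whose
growth rate is at most `2q - 2` because it has a positive subinvariant vector for `2q - 2`. For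
general primitive elements write `g = w h w⁻¹` with `h` cyclically reduced and primitive: each
letter of `w` costs two letters of `g`, and `2q - 1 < (2q - 2)²` makes the sum over the length of
`w` geometric.

For the lower bound, `x w` is primitive whenever `w` does not involve the generator `x`, and there
are at least `(2q - 3) ^ k` such reduced words `w` of length `k`.
-/

section Primitive

variable {G H : Type*} [Group G] [Group H]

theorem IsPrimitive.of_mulEquiv {ι : Type*} (e : FreeGroup ι ≃* G) (i : ι) :
    IsPrimitive (e (FreeGroup.of i)) := by
  have hinj : Function.Injective fun i => e (FreeGroup.of i) :=
    e.injective.comp FreeGroup.of_injective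
  refine ⟨Set.range fun i => e (FreeGroup.of i), ⟨i, rfl⟩, ?_, ?_⟩
  · have h := congrArg (Subgroup.map e.toMonoidHom) (FreeGroup.closure_range_of ι)
    rwa [MonoidHom.map_closure, ← Set.range_comp, Subgroup.map_top_of_surjective _ e.surjective]
      at h
  · have h : FreeGroup.lift (Subtype.val : (Set.range fun i => e (FreeGroup.of i)) → G) =
        e.toMonoidHom.comp
          (FreeGroup.freeGroupCongr (Equiv.ofInjective _ hinj)).symm.toMonoidHom := by
      ext ⟨_, j, rfl⟩
      simp [(Equiv.ofInjective_symm_apply hinj j :)]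
    rw [h]
    exact e.injective.comp (MulEquiv.injective _)

theorem IsPrimitive.exists_mulEquiv {g : G} (hg : IsPrimitive g) :
    ∃ (s : Set G) (e : FreeGroup s ≃* G) (i : s), e (FreeGroup.of i) = g := by
  obtain ⟨s, hs, hcl, hinj⟩ := hg
  have hsurj : Function.Surjective (FreeGroup.lift (Subtype.val : s → G)) := by
    rw [← MonoidHom.range_eq_top, FreeGroup.range_lift_eq_closure, Subtype.range_val, hcl]
  exact ⟨s, MulEquiv.ofBijective _ ⟨hinj, hsurj⟩, ⟨g, hs⟩, FreeGroup.lift_apply_of⟩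

theorem IsPrimitive.map {g : G} (hg : IsPrimitive g) (e : G ≃* H) : IsPrimitive (e g) := by
  obtain ⟨s, f, i, rfl⟩ := hg.exists_mulEquiv
  exact .of_mulEquiv (f.trans e) i

theorem IsPrimitive.conj {g : G} (hg : IsPrimitive g) (h : G) : IsPrimitive (h * g * h⁻¹) :=
  hg.map (MulAut.conj h)

theorem IsPrimitive.ne_one {g : G} (hg : IsPrimitive g) : g ≠ 1 := by
  obtain ⟨s, e, i, rfl⟩ := hg.exists_mulEquiv
  exact (map_ne_one_iff e e.injective).2 (FreeGroup.of_ne_one i)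

end Primitive

/-- The formal inverse of a letter `x` or `x⁻¹`. -/
def letterInv {X : Type*} (l : X × Bool) : X × Bool := (l.1, !l.2)

section LetterInv

variable {X : Type*}

@[simp]
theorem letterInv_letterInv (l : X × Bool) : letterInv (letterInv l) = l := by
  simp [letterInv]

theorem letterInv_ne_self (l : X × Bool) : letterInv l ≠ l := by
  obtain ⟨x, b⟩ := l
  cases b <;> simp [letterInv]

theorem letterInv_eq_iff {l m : X × Bool} : letterInv l = m ↔ l = letterInv m :=
  ⟨fun h => by rw [← h, letterInv_letterInv], fun h => by rw [h, letterInv_letterInv]⟩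

@[simp]
theorem letterInv_inj {l m : X × Bool} : letterInv l = letterInv m ↔ l = m := by
  rw [letterInv_eq_iff, letterInv_letterInv]

theorem ne_letterInv_iff {l m : X × Bool} : m ≠ letterInv l ↔ (l.1 = m.1 → l.2 = m.2) := by
  obtain ⟨x, b⟩ := l
  obtain ⟨y, c⟩ := m
  cases b <;> cases c <;> simp [letterInv, eq_comm]

end LetterInv

section AlmostInvariant

variable {G H : Type*} [Group G] [Group H]

/-- A subset `P` of a group is *almost invariant* if each of its left translates differs from it
by finitely many elements. -/
def IsAlmostInvariant (P : Set G) : Prop :=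
  ∀ h : G, ∀ᶠ u in Filter.cofinite, h * u ∈ P ↔ u ∈ P

theorem IsAlmostInvariant.of_closure_eq_top {P S : Set G} (hS : Subgroup.closure S = ⊤)
    (hP : ∀ h ∈ S, ∀ᶠ u in Filter.cofinite, h * u ∈ P ↔ u ∈ P) : IsAlmostInvariant P := by
  intro h
  have tendsto_mul (k : G) : Filter.Tendsto (k * ·) Filter.cofinite Filter.cofinite :=
    (mul_right_injective k).tendsto_cofinite
  induction hS ▸ Subgroup.mem_top h using Subgroup.closure_induction with
  | mem h hh => exact hP h hh
  | one => simp
  | mul h k _ _ ihh ihk =>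
    filter_upwards [(tendsto_mul k).eventually ihh, ihk] with u hu hku
    rw [mul_assoc, hu, hku]
  | inv h _ ih =>
    filter_upwards [(tendsto_mul h⁻¹).eventually ih] with u hu
    rw [← hu, mul_inv_cancel_left]

theorem IsAlmostInvariant.preimage {P : Set G} (hP : IsAlmostInvariant P) {f : H →* G}
    (hf : Function.Injective f) : IsAlmostInvariant (f ⁻¹' P) := by
  intro h
  filter_upwards [hf.tendsto_cofinite.eventually (hP (f h))] with u hu
  rwa [Set.mem_preimage, map_mul]

variable {ι : Type*} [DecidableEq ι]

theorem getLast?_toWord_of_mul {i : ι} {u : FreeGroup ι} (hu : u ≠ 1)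
    (hui : u ≠ (FreeGroup.of i)⁻¹) :
    (FreeGroup.of i * u).toWord.getLast? = u.toWord.getLast? := by
  rw [FreeGroup.of, ← FreeGroup.mk_toWord (x := u), FreeGroup.mul_mk, FreeGroup.toWord_mk,
    List.singleton_append, FreeGroup.reduce.cons, FreeGroup.reduce_toWord, FreeGroup.mk_toWord]
  rcases hL : u.toWord with - | ⟨m, L⟩
  · exact absurd (FreeGroup.toWord_eq_nil_iff.1 hL) hu
  · dsimp only
    split_ifs with hm
    · obtain ⟨n, L, rfl⟩ : ∃ n L', L = n :: L' := by
        refine List.exists_cons_of_ne_nil fun hnil => hui ?_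
        rw [← FreeGroup.mk_toWord (x := u), hL, hnil, FreeGroup.of, FreeGroup.inv_mk]
        simp [FreeGroup.invRev, hm]
      simp
    · simp

variable (j : ι)

theorem isAlmostInvariant_getLast?_eq :
    IsAlmostInvariant {u : FreeGroup ι | u.toWord.getLast? = some (j, true)} := by
  refine .of_closure_eq_top (FreeGroup.closure_range_of ι) ?_
  rintro _ ⟨i, rfl⟩
  filter_upwards [Set.finite_singleton (1 : FreeGroup ι) |>.eventually_cofinite_notMem,
    Set.finite_singleton (FreeGroup.of i)⁻¹ |>.eventually_cofinite_notMem] with u hu hui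
  simp only [getLast?_toWord_of_mul hu hui]

variable {j}

theorem getLast?_toWord_of_mul_eq_iff {i : ι} (hij : i ≠ j) (u : FreeGroup ι) :
    (FreeGroup.of i * u).toWord.getLast? = some (j, true) ↔
      u.toWord.getLast? = some (j, true) := by
  by_cases hu : u = 1
  · simp [hu, hij]
  by_cases hui : u = (FreeGroup.of i)⁻¹
  · simp [hui, FreeGroup.invRev]
  · rw [getLast?_toWord_of_mul hu hui]

theorem IsPrimitive.exists_isAlmostInvariant {X : Type*} [Nontrivial X] {g : FreeGroup X}
    (hg : IsPrimitive g) : ∃ P : Set (FreeGroup X), IsAlmostInvariant P ∧ P.Nonempty ∧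
      Pᶜ.Nonempty ∧ ∀ u, g * u ∈ P ↔ u ∈ P := by
  classical
  obtain ⟨s, e, i, rfl⟩ := hg.exists_mulEquiv
  have : Nontrivial s := (Equiv.ofFreeGroupEquiv e).nontrivial
  obtain ⟨j, hij⟩ := exists_ne i
  refine ⟨e.symm ⁻¹' {u | u.toWord.getLast? = some (j, true)},
    (isAlmostInvariant_getLast?_eq j).preimage (f := e.symm.toMonoidHom) e.symm.injective,
    ⟨e (FreeGroup.of j), by simp⟩, ⟨1, by simp⟩, fun u => ?_⟩
  simpa using getLast?_toWord_of_mul_eq_iff hij.symm (e.symm u)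

end AlmostInvariant

section CutVertex

variable {X : Type*} {P : Set (FreeGroup X)} {L : List (X × Bool)}

/-- The word `L` is *mixed* for `P` if the cone of reduced words with suffix `L` meets both `P`
and its complement. -/
def IsMixed (P : Set (FreeGroup X)) (L : List (X × Bool)) : Prop :=
  ∃ M N, FreeGroup.IsReduced (M ++ L) ∧ FreeGroup.IsReduced (N ++ L) ∧
    FreeGroup.mk (M ++ L) ∈ P ∧ FreeGroup.mk (N ++ L) ∉ P

theorem mk_append_mem_iff_of_not_isMixed (hL : ¬ IsMixed P L) {M : List (X × Bool)}
    (hM : FreeGroup.IsReduced (M ++ L)) : FreeGroup.mk (M ++ L) ∈ P ↔ FreeGroup.mk L ∈ P := by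
  have hnil : FreeGroup.IsReduced ([] ++ L) := hM.infix (List.suffix_append M L).isInfix
  by_contra h
  rcases not_iff.1 h with h
  by_cases hLP : FreeGroup.mk L ∈ P
  · exact hL ⟨[], M, hnil, hM, hLP, fun hMP => h.not.1 (by simpa using hMP) hLP⟩
  · exact hL ⟨M, [], hM, hnil, by tauto, hLP⟩

theorem IsAlmostInvariant.exists_mk_cons_mem_iff [Finite X] (hP : IsAlmostInvariant P) :
    ∃ n, ∀ l L, FreeGroup.IsReduced L → n < L.length →
      (FreeGroup.mk (l :: L) ∈ P ↔ FreeGroup.mk L ∈ P) := by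
  classical
  have hfin : {u | ¬ ∀ l : X × Bool, FreeGroup.mk [l] * u ∈ P ↔ u ∈ P}.Finite :=
    Filter.eventually_all.2 fun l => hP (FreeGroup.mk [l])
  obtain ⟨n, hn⟩ := (hfin.image FreeGroup.norm).bddAbove
  refine ⟨n, fun l L hL hlt => ?_⟩
  by_contra h
  have := hn ⟨FreeGroup.mk L, fun hall => h (hall l), rfl⟩
  rw [FreeGroup.norm, FreeGroup.toWord_mk, hL.reduce_eq] at this
  omega

theorem IsAlmostInvariant.exists_length_le_of_isMixed [Finite X] (hP : IsAlmostInvariant P) :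
    ∃ n, ∀ L, IsMixed P L → L.length ≤ n := by
  obtain ⟨n, hn⟩ := hP.exists_mk_cons_mem_iff
  refine ⟨n, fun L ⟨M, N, hM, hN, hMP, hNP⟩ => ?_⟩
  by_contra! hlt
  have mem_iff (M : List (X × Bool)) (hM : FreeGroup.IsReduced (M ++ L)) :
      FreeGroup.mk (M ++ L) ∈ P ↔ FreeGroup.mk L ∈ P := by
    induction M with
    | nil => rfl
    | cons l M ih =>
      have hM' : FreeGroup.IsReduced (M ++ L) := hM.infix (List.suffix_cons l _).isInfix
      rw [← ih hM', List.cons_append, hn l _ hM' (by simp; omega)]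
  exact hNP ((mem_iff N hN).2 ((mem_iff M hM).1 hMP))

theorem IsAlmostInvariant.exists_isMixed_forall_not_isMixed_cons [Finite X]
    (hP : IsAlmostInvariant P) (hne : P.Nonempty) (hne' : Pᶜ.Nonempty) :
    ∃ L, IsMixed P L ∧ ∀ l, ¬ IsMixed P (l :: L) := by
  classical
  by_contra! h
  have exists_length_eq (n : ℕ) : ∃ L, IsMixed P L ∧ L.length = n := by
    induction n with
    | zero =>
      obtain ⟨⟨u, hu⟩, ⟨v, hv⟩⟩ := And.intro hne hne'
      exact ⟨[], ⟨u.toWord, v.toWord, by simpa using FreeGroup.isReduced_toWord,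
        by simpa using FreeGroup.isReduced_toWord, by simpa [FreeGroup.mk_toWord],
        by simpa [FreeGroup.mk_toWord]⟩, rfl⟩
    | succ n ih =>
      obtain ⟨L, hL, rfl⟩ := ih
      obtain ⟨l, hl⟩ := h L hL
      exact ⟨l :: L, hl, rfl⟩
  obtain ⟨n, hn⟩ := hP.exists_length_le_of_isMixed
  obtain ⟨L, hL, hlen⟩ := exists_length_eq (n + 1)
  have := hn L hL
  omega

theorem isReduced_cons_or_isReduced_cons {l m : X × Bool} (hL : FreeGroup.IsReduced L)
    (hlm : l ≠ m) : FreeGroup.IsReduced (l :: L) ∨ FreeGroup.IsReduced (m :: L) := by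
  rcases L with - | ⟨a, L⟩
  · simp
  · simp only [FreeGroup.isReduced_cons_cons, hL, and_true, ← ne_letterInv_iff]
    by_contra! h
    exact hlm (by rw [← letterInv_letterInv l, ← h.1, h.2, letterInv_letterInv])

theorem mk_append_mem_iff_mk_invRev_append_mem {p s : List (X × Bool)}
    (hP : ∀ u, FreeGroup.mk (p ++ s) * u ∈ P ↔ u ∈ P) (L : List (X × Bool)) :
    FreeGroup.mk (p ++ L) ∈ P ↔ FreeGroup.mk (FreeGroup.invRev s ++ L) ∈ P := by
  rw [← hP (FreeGroup.mk (FreeGroup.invRev s ++ L)), ← FreeGroup.mul_mk, ← FreeGroup.mul_mk,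
    ← FreeGroup.mul_mk, ← FreeGroup.inv_mk, mul_assoc, mul_inv_cancel_left]

theorem mk_append_cons_mem_iff {p : List (X × Bool)} {l : X × Bool}
    (hp : FreeGroup.IsReduced (p ++ [l])) (hl : FreeGroup.IsReduced (l :: L))
    (hmix : ¬ IsMixed P (l :: L)) :
    FreeGroup.mk (p ++ [l] ++ L) ∈ P ↔ FreeGroup.mk (l :: L) ∈ P := by
  have := hp.append_overlap (L₃ := L) hl (List.cons_ne_nil l [])
  rw [List.append_assoc] at this ⊢
  exact mk_append_mem_iff_of_not_isMixed hmix this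

theorem isReduced_invRev {w : List (X × Bool)} (hw : FreeGroup.IsReduced w) :
    FreeGroup.IsReduced (FreeGroup.invRev w) := by
  classical
  rw [FreeGroup.isReduced_iff_reduce_eq, FreeGroup.reduce_invRev, hw.reduce_eq]

theorem mk_cons_mem_iff_of_infix {w : List (X × Bool)} {x y : X × Bool}
    (hw : FreeGroup.IsReduced w) (hP : ∀ u, FreeGroup.mk w * u ∈ P ↔ u ∈ P)
    (hmix : ∀ l, ¬ IsMixed P (l :: L)) (hxy : [x, y] <:+: w)
    (hx : FreeGroup.IsReduced (x :: L)) (hy : FreeGroup.IsReduced (letterInv y :: L)) :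
    FreeGroup.mk (x :: L) ∈ P ↔ FreeGroup.mk (letterInv y :: L) ∈ P := by
  obtain ⟨p, s, rfl⟩ := hxy
  have hsplit : p ++ [x, y] ++ s = (p ++ [x]) ++ (y :: s) := by simp
  rw [hsplit] at hP hw
  have hinv : FreeGroup.invRev (y :: s) = FreeGroup.invRev s ++ [letterInv y] :=
    FreeGroup.invRev_cons
  have hs := isReduced_invRev (hw.infix (List.suffix_append _ _).isInfix)
  rw [hinv] at hs
  rw [← mk_append_cons_mem_iff (hw.infix (List.prefix_append _ _).isInfix) hx (hmix x),
    ← mk_append_cons_mem_iff hs hy (hmix _), ← hinv,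
    mk_append_mem_iff_mk_invRev_append_mem hP]

theorem exists_isReduced_cons_mk_mem_iff {w : List (X × Bool)} (hnil : w ≠ [])
    (hw : FreeGroup.IsCyclicallyReduced w) (hP : ∀ u, FreeGroup.mk w * u ∈ P ↔ u ∈ P)
    (hmix : ∀ l, ¬ IsMixed P (l :: L)) {M : List (X × Bool)} (hM : FreeGroup.IsReduced (M ++ L)) :
    ∃ l, FreeGroup.IsReduced (l :: L) ∧
      (FreeGroup.mk (l :: L) ∈ P ↔ FreeGroup.mk (M ++ L) ∈ P) := by
  rcases M.eq_nil_or_concat' with rfl | ⟨M, l, rfl⟩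
  · rw [List.nil_append] at hM ⊢
    let x := w.head hnil
    let y := w.getLast hnil
    have hxy : letterInv x ≠ y := fun h => ne_letterInv_iff.2
      (hw.2 y (List.getLast_mem_getLast? hnil) x (List.head_mem_head? hnil))
      (letterInv_eq_iff.1 h)
    rcases isReduced_cons_or_isReduced_cons hM hxy with hx | hy
    · have hinv : FreeGroup.invRev w = FreeGroup.invRev w.tail ++ [letterInv x] := by
        conv_lhs => rw [← List.cons_head_tail hnil]
        exact FreeGroup.invRev_cons
      refine ⟨_, hx, ?_⟩
      rw [← mk_append_cons_mem_iff (hinv ▸ isReduced_invRev hw.1) hx (hmix _), ← hinv,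
        ← mk_append_mem_iff_mk_invRev_append_mem (p := []) hP, List.nil_append]
    · have hlast : w.dropLast ++ [y] = w := List.dropLast_append_getLast hnil
      refine ⟨y, hy, ?_⟩
      rw [← mk_append_cons_mem_iff (hlast.symm ▸ hw.1) hy (hmix y), hlast, ← FreeGroup.mul_mk, hP]
  · rw [List.append_assoc] at hM ⊢
    exact ⟨l, hM.infix (List.suffix_append M _).isInfix,
      (mk_append_mem_iff_of_not_isMixed (hmix l) hM).symm⟩

theorem exists_forall_ne_isReduced_cons [Nontrivial X] {a b : X × Bool}
    (ha : FreeGroup.IsReduced (a :: L)) (hb : FreeGroup.IsReduced (b :: L)) :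
    ∃ c, a ≠ c ∧ b ≠ c ∧ ∀ l, l ≠ c → FreeGroup.IsReduced (l :: L) := by
  by_cases! hall : ∀ l, FreeGroup.IsReduced (l :: L)
  · suffices ∃ c, a ≠ c ∧ b ≠ c from
      this.imp fun c ⟨hac, hbc⟩ => ⟨hac, hbc, fun l _ => hall l⟩
    by_cases hab : a.1 = b.1
    · obtain ⟨x, hx⟩ := exists_ne a.1
      exact ⟨(x, true), fun h => hx (by rw [h]), fun h => hx (by rw [hab, h])⟩
    · exact ⟨letterInv a, (letterInv_ne_self a).symm, fun h => hab (by rw [h]; rfl)⟩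
  · obtain ⟨c, hc⟩ := hall
    have hL : FreeGroup.IsReduced L := ha.infix (List.suffix_cons a L).isInfix
    exact ⟨c, fun h => hc (h ▸ ha), fun h => hc (h ▸ hb),
      fun l hl => (isReduced_cons_or_isReduced_cons hL hl).resolve_right hc⟩

/-- The transitions from a letter `x` to a letter `y` in reduced words whose Whitehead graph (with
an edge joining `x` to `y⁻¹` for each subword `x y`) has no edge between `A` and its complement
outside the vertex `c`. It is irrelevant whether `c` belongs to `A`. -/
def IsCutTransition (c : X × Bool) (A : Finset (X × Bool)) (x y : X × Bool) : Prop :=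
  y ≠ letterInv x ∧ (x = c ∨ letterInv y = c ∨ (x ∈ A ↔ letterInv y ∈ A))

/-- Whitehead's cut vertex lemma. -/
theorem IsPrimitive.exists_isChain_isCutTransition [Finite X] [DecidableEq X] [Nontrivial X]
    {g : FreeGroup X} (hg : IsPrimitive g) (hred : FreeGroup.IsCyclicallyReduced g.toWord) :
    ∃ c A, (∃ a ∈ A, a ≠ c) ∧ (∃ b ∉ A, b ≠ c) ∧ g.toWord.IsChain (IsCutTransition c A) := by
  obtain ⟨P, hP, hne, hne', hgP⟩ := hg.exists_isAlmostInvariant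
  obtain ⟨L, ⟨M, N, hM, hN, hMP, hNP⟩, hmix⟩ :=
    hP.exists_isMixed_forall_not_isMixed_cons hne hne'
  rw [← FreeGroup.mk_toWord (x := g)] at hgP
  have hnil : g.toWord ≠ [] := fun h => hg.ne_one (FreeGroup.toWord_eq_nil_iff.1 h)
  obtain ⟨a, ha, haP⟩ := exists_isReduced_cons_mk_mem_iff hnil hred hgP hmix hM
  obtain ⟨b, hb, hbP⟩ := exists_isReduced_cons_mk_mem_iff hnil hred hgP hmix hN
  obtain ⟨c, hac, hbc, hc⟩ := exists_forall_ne_isReduced_cons ha hb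
  let A : Finset (X × Bool) := (Set.toFinite {l | FreeGroup.mk (l :: L) ∈ P}).toFinset
  have mem_A (l : X × Bool) : l ∈ A ↔ FreeGroup.mk (l :: L) ∈ P := Set.Finite.mem_toFinset _
  refine ⟨c, A, ⟨a, (mem_A a).2 (haP.2 hMP), hac⟩, ⟨b, fun h => hNP (hbP.1 ((mem_A b).1 h)), hbc⟩,
    List.isChain_iff_forall_rel_of_append_cons_cons.2 fun {x y p s} hw => ?_⟩
  have hxy : [x, y] <:+: g.toWord := ⟨p, s, by simp [hw]⟩
  refine ⟨ne_letterInv_iff.2 ?_, ?_⟩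
  · exact FreeGroup.isReduced_cons_cons.1 (hred.1.infix hxy) |>.1
  · by_cases hx : x = c
    · exact .inl hx
    by_cases hy : letterInv y = c
    · exact .inr (.inl hy)
    · rw [mem_A, mem_A]
      exact .inr (.inr (mk_cons_mem_iff_of_infix hred.1 hgP hmix hxy (hc x hx) (hc _ hy)))

end CutVertex

section ChainCount

variable {α : Type*} [Fintype α] (R : α → α → Prop) [DecidableRel R]

/-- The lists `l` of length `k` such that `x :: l` is an `R`-chain. -/
def chainsFrom [DecidableEq α] : ℕ → α → Finset (List α)
  | 0, _ => {[]}
  | k + 1, x => (Finset.univ.filter (R x)).biUnion fun y => (chainsFrom k y).image (List.cons y)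

/-- A real vector bounded below by `1` which is subinvariant for `r⁻¹` times the transition matrix
of the relation `R`. It bounds the growth rate of the number of `R`-chains by `r`. -/
def IsSubinvariantWeight (r : ℝ) (f : α → ℝ) : Prop :=
  (∀ x, 1 ≤ f x) ∧ ∀ x, ∑ y with R x y, f y ≤ r * f x

variable {R}

section DecidableEq

variable [DecidableEq α]

theorem mem_chainsFrom {k : ℕ} {x : α} {l : List α} :
    l ∈ chainsFrom R k x ↔ l.length = k ∧ (x :: l).IsChain R := by
  induction k generalizing x l with
  | zero => simp +contextual [chainsFrom, List.length_eq_zero_iff]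
  | succ k ih =>
    cases l with
    | nil => simp [chainsFrom]
    | cons y l => simp [chainsFrom, ih, and_left_comm]

theorem card_chainsFrom_succ (k : ℕ) (x : α) :
    (chainsFrom R (k + 1) x).card = ∑ y with R x y, (chainsFrom R k y).card := by
  rw [chainsFrom, Finset.card_biUnion]
  · exact Finset.sum_congr rfl fun y _ => Finset.card_image_of_injective _ List.cons_injective
  · intro y _ z _ hyz
    rw [Function.onFun, Finset.disjoint_left]
    intro l hl hl'
    obtain ⟨l₁, -, rfl⟩ := Finset.mem_image.1 hl
    obtain ⟨l₂, -, h⟩ := Finset.mem_image.1 hl'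
    exact hyz (List.cons.inj h).1.symm

theorem pow_le_card_chainsFrom {d : ℕ} (hd : ∀ x, d ≤ (Finset.univ.filter (R x)).card) (k : ℕ)
    (x : α) : d ^ k ≤ (chainsFrom R k x).card := by
  induction k generalizing x with
  | zero => simp [chainsFrom]
  | succ k ih =>
    rw [card_chainsFrom_succ, pow_succ']
    calc d * d ^ k ≤ (Finset.univ.filter (R x)).card * d ^ k := by gcongr; exact hd x
      _ = ∑ y with R x y, d ^ k := by simp
      _ ≤ _ := Finset.sum_le_sum fun y _ => ih y

theorem IsSubinvariantWeight.card_chainsFrom_le {r : ℝ} {f : α → ℝ}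
    (hf : IsSubinvariantWeight R r f) (hr : 0 ≤ r) (k : ℕ) (x : α) :
    ((chainsFrom R k x).card : ℝ) ≤ f x * r ^ k := by
  induction k generalizing x with
  | zero => simpa [chainsFrom] using hf.1 x
  | succ k ih =>
    rw [card_chainsFrom_succ, Nat.cast_sum]
    calc ∑ y with R x y, ((chainsFrom R k y).card : ℝ)
        ≤ ∑ y with R x y, f y * r ^ k := Finset.sum_le_sum fun y _ => ih y
      _ = (∑ y with R x y, f y) * r ^ k := by rw [Finset.sum_mul]
      _ ≤ (r * f x) * r ^ k := by gcongr; exact hf.2 x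
      _ = f x * r ^ (k + 1) := by ring

end DecidableEq

theorem IsSubinvariantWeight.exists_ncard_isChain_le {r : ℝ} {f : α → ℝ}
    (hf : IsSubinvariantWeight R r f) (hr : 0 < r) :
    ∃ C : ℝ, 0 ≤ C ∧ ∀ k, ({l : List α | l.length = k ∧ l.IsChain R}.ncard : ℝ) ≤ C * r ^ k := by
  classical
  have hsum : 0 ≤ ∑ x, f x := Finset.sum_nonneg fun x _ => zero_le_one.trans (hf.1 x)
  have hdiv : 0 ≤ (∑ x, f x) / r := by positivity
  refine ⟨1 + (∑ x, f x) / r, by positivity, fun k => ?_⟩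
  rcases k with - | k
  · have hnil : {l : List α | l.length = 0 ∧ l.IsChain R} = {[]} := by
      ext l
      simp +contextual [List.length_eq_zero_iff]
    rw [hnil, Set.ncard_singleton]
    simpa using hdiv
  · have hsub : {l : List α | l.length = k + 1 ∧ l.IsChain R} ⊆
        (Finset.univ.biUnion fun x => (chainsFrom R k x).image (List.cons x) : Finset _) := by
      rintro (- | ⟨x, l⟩) ⟨hlen, hl⟩
      · simp at hlen
      · simpa [mem_chainsFrom, hl] using hlen
    calc ({l : List α | l.length = k + 1 ∧ l.IsChain R}.ncard : ℝ)
        ≤ ∑ x, (chainsFrom R k x).card := by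
          refine (Nat.cast_le.2 (Set.ncard_le_ncard hsub (Finset.finite_toSet _))).trans ?_
          rw [Set.ncard_coe_finset]
          exact_mod_cast Finset.card_biUnion_le.trans
            (Finset.sum_le_sum fun x _ => Finset.card_image_le)
      _ ≤ ∑ x, f x * r ^ k := by
          push_cast
          exact Finset.sum_le_sum fun x _ => hf.card_chainsFrom_le hr.le k x
      _ = (∑ x, f x) / r * r ^ (k + 1) := by
          rw [← Finset.sum_mul, pow_succ']
          field_simp
      _ ≤ (1 + (∑ x, f x) / r) * r ^ (k + 1) := by
          gcongr
          linarith

theorem sum_filter_le_of_sum_le_add {f : α → ℝ} (hf : ∀ x, 0 ≤ f x) {p : α → Prop}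
    [DecidablePred p] {S : Finset α} (hS : ∀ y ∈ S, ¬ p y) {t : ℝ}
    (ht : ∑ y, f y ≤ t + ∑ y ∈ S, f y) : ∑ y with p y, f y ≤ t := by
  classical
  have hdisj : Disjoint (Finset.univ.filter p) S :=
    Finset.disjoint_left.2 fun y hy hyS => hS y hyS (Finset.mem_filter.1 hy).2
  have := Finset.sum_le_univ_sum_of_nonneg hf (s := Finset.univ.filter p ∪ S)
  rw [Finset.sum_union hdisj] at this
  linarith

end ChainCount

section CutWeight

variable {X : Type*} {c a b : X × Bool} {A : Finset (X × Bool)} {m : ℝ}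

theorem not_isCutTransition_self_letterInv (x : X × Bool) :
    ¬ IsCutTransition c A x (letterInv x) :=
  fun h => h.1 rfl

theorem not_isCutTransition_letterInv_of_mem {x : X × Bool} (hx : x ≠ c) (hxA : x ∈ A)
    (ha : a ≠ c) (haA : a ∉ A) : ¬ IsCutTransition c A x (letterInv a) := by
  simp [IsCutTransition, *]

theorem not_isCutTransition_of_notMem {x : X × Bool} (hx : x ≠ c) (hxA : x ∉ A)
    (hcA : letterInv c ∈ A) : ¬ IsCutTransition c A x c := by
  simp [IsCutTransition, hx, hxA, hcA, letterInv_ne_self]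

theorem four_le_card_of_ne_letterInv [Fintype X] (hac : a ≠ c) (hac' : a ≠ letterInv c) :
    (4 : ℝ) ≤ Fintype.card (X × Bool) := by
  classical
  have h : ({a, letterInv a, c, letterInv c} : Finset (X × Bool)).card = 4 := by
    simp [hac, hac', (letterInv_ne_self _).symm, letterInv_eq_iff]
  exact_mod_cast h ▸ Finset.card_le_univ _

variable [DecidableEq X]

instance (c : X × Bool) (A : Finset (X × Bool)) : DecidableRel (IsCutTransition c A) :=
  fun _ _ => inferInstanceAs (Decidable (_ ∧ _))

/-- The subinvariant weight used when `a` is the only letter other than `c` on its side of the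
cut. It is chosen to make the inequality an equality at the letters `a` and `a⁻¹`, with
`m + 3` the number of letters. -/
def singletonCutWeight (c a : X × Bool) (m : ℝ) (y : X × Bool) : ℝ :=
  m * (m + 1) + (if y = c then m + 1 else 0) + (if y = letterInv a then 1 else 0) -
    if y = a then m ^ 2 else 0

theorem singletonCutWeight_cut (hac : a ≠ c) (hac' : a ≠ letterInv c) :
    singletonCutWeight c a m c = (m + 1) ^ 2 := by
  have hca : c ≠ letterInv a := fun h => hac' (letterInv_eq_iff.1 h.symm)
  simp only [singletonCutWeight, hac.symm, hca, if_true, if_false]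
  ring

theorem singletonCutWeight_self (hac : a ≠ c) : singletonCutWeight c a m a = m := by
  simp only [singletonCutWeight, hac, (letterInv_ne_self a).symm, if_true, if_false]
  ring

theorem singletonCutWeight_letterInv (hac' : a ≠ letterInv c) :
    singletonCutWeight c a m (letterInv a) = m ^ 2 + m + 1 := by
  simp only [singletonCutWeight, letterInv_eq_iff, hac', (letterInv_ne_self a).symm,
    if_true, if_false]
  ring

theorem singletonCutWeight_of_ne {y : X × Bool} (hyc : y ≠ c) (hya : y ≠ a)
    (hya' : y ≠ letterInv a) : singletonCutWeight c a m y = m * (m + 1) := by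
  simp [singletonCutWeight, hyc, hya, hya']

theorem one_le_singletonCutWeight (hac : a ≠ c) (hm : 1 ≤ m) (y : X × Bool) :
    1 ≤ singletonCutWeight c a m y := by
  rcases eq_or_ne y a with rfl | hya
  · rwa [singletonCutWeight_self hac]
  · have hmm : 1 ≤ m * (m + 1) := by nlinarith
    simp only [singletonCutWeight, hya, if_false]
    split_ifs <;> linarith

variable [Fintype X]

theorem isCutTransition_compl {x y : X × Bool} :
    IsCutTransition c Aᶜ x y ↔ IsCutTransition c A x y := by
  simp only [IsCutTransition, Finset.mem_compl, not_iff_not]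

theorem isSubinvariantWeight_of_notMem (hcA : letterInv c ∈ A) (hab : a ≠ b) (hac : a ≠ c)
    (haA : a ∉ A) (hbc : b ≠ c) (hbA : b ∉ A) :
    IsSubinvariantWeight (IsCutTransition c A) (Fintype.card (X × Bool) - 2)
      fun y => 1 + if y = c then 1 else 0 := by
  have hac' : a ≠ letterInv c := fun h => haA (h ▸ hcA)
  have hcard := four_le_card_of_ne_letterInv hac hac'
  set f : X × Bool → ℝ := fun y => 1 + if y = c then 1 else 0 with hf
  have one_le (x) : 1 ≤ f x := by
    simp only [hf]
    split_ifs <;> norm_num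
  have hsum : ∑ y, f y = Fintype.card (X × Bool) + 1 := by
    simp [hf, Finset.sum_add_distrib]
  have hfc : f c = 2 := by norm_num [hf]
  have hf_ne {x} (hx : x ≠ c) : f x = 1 := by simp [hf, hx]
  refine ⟨one_le, fun x => ?_⟩
  have sum_le {S : Finset (X × Bool)} (hS : ∀ y ∈ S, ¬ IsCutTransition c A x y) {t : ℝ} :=
    sum_filter_le_of_sum_le_add (fun y => zero_le_one.trans (one_le y)) hS (t := t)
  have hx := not_isCutTransition_self_letterInv (c := c) (A := A) x
  rcases eq_or_ne x c with rfl | hxc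
  · refine sum_le (S := {letterInv x}) (by simpa using hx) ?_
    rw [Finset.sum_singleton, hsum, hfc, hf_ne (letterInv_ne_self x)]
    linarith
  by_cases hxA : x ∈ A
  · have hxa : x ≠ a := fun h => haA (h ▸ hxA)
    have hxb : x ≠ b := fun h => hbA (h ▸ hxA)
    refine sum_le (S := {letterInv x, letterInv a, letterInv b}) ?_ ?_
    · simp [not_isCutTransition_letterInv_of_mem, *]
    · rw [hsum, hf_ne hxc, Finset.sum_insert (by simp [hxa, hxb]),
        Finset.sum_pair (by simpa using hab)]
      linarith [one_le (letterInv x), one_le (letterInv a), one_le (letterInv b)]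
  · have hxc' : letterInv x ≠ c := fun h => hxA (letterInv_eq_iff.1 h ▸ hcA)
    refine sum_le (S := {letterInv x, c}) ?_ ?_
    · simp [not_isCutTransition_of_notMem, *]
    · rw [hsum, hf_ne hxc, Finset.sum_pair hxc', hfc, hf_ne hxc']
      linarith

theorem sum_singletonCutWeight (hm : (Fintype.card (X × Bool) : ℝ) = m + 3) :
    ∑ y, singletonCutWeight c a m y = m ^ 3 + 3 * m ^ 2 + 4 * m + 2 := by
  simp only [singletonCutWeight, Finset.sum_sub_distrib, Finset.sum_add_distrib,
    Finset.sum_const, Finset.card_univ, nsmul_eq_mul, hm, Finset.sum_ite_eq', Finset.mem_univ,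
    if_true]
  ring

theorem sum_singletonCutWeight_le_of_mem (hm : (Fintype.card (X × Bool) : ℝ) = m + 3)
    (hac : a ≠ c) (hac' : a ≠ letterInv c) (haA : a ∉ A) {x : X × Bool} (hxc : x ≠ c)
    (hxA : x ∈ A) :
    ∑ y with IsCutTransition c A x y, singletonCutWeight c a m y ≤
      (m + 1) * singletonCutWeight c a m x := by
  have hm1 : 1 ≤ m := by linarith [four_le_card_of_ne_letterInv hac hac']
  have hxa : x ≠ a := fun h => haA (h ▸ hxA)
  refine sum_filter_le_of_sum_le_add (S := {letterInv x, letterInv a})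
    (fun y => zero_le_one.trans (one_le_singletonCutWeight hac hm1 y)) ?_ ?_
  · simp [not_isCutTransition_self_letterInv, not_isCutTransition_letterInv_of_mem, *]
  rw [sum_singletonCutWeight hm, Finset.sum_pair (by simpa using hxa),
    singletonCutWeight_letterInv hac']
  rcases eq_or_ne x (letterInv a) with rfl | hxa'
  · rw [letterInv_letterInv, singletonCutWeight_self hac, singletonCutWeight_letterInv hac']
    exact le_of_eq (by ring)
  rcases eq_or_ne x (letterInv c) with rfl | hxc'
  · rw [letterInv_letterInv, singletonCutWeight_cut hac hac', singletonCutWeight_of_ne hxc hxa hxa']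
    nlinarith
  · have hx_inv : singletonCutWeight c a m (letterInv x) = m * (m + 1) :=
      singletonCutWeight_of_ne (fun h => hxc' (letterInv_eq_iff.1 h))
        (fun h => hxa' (letterInv_eq_iff.1 h)) (by simpa using hxa)
    have hm2 : 2 ≤ m := by
      have h : ({a, letterInv a, c, letterInv c, x} : Finset (X × Bool)).card = 5 := by
        simp [*, Ne.symm hxa, Ne.symm hxa', Ne.symm hxc, Ne.symm hxc', letterInv_eq_iff,
          (letterInv_ne_self _).symm]
      have h' : (5 : ℝ) ≤ Fintype.card (X × Bool) := by exact_mod_cast h ▸ Finset.card_le_univ _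
      linarith
    rw [hx_inv, singletonCutWeight_of_ne hxc hxa hxa']
    nlinarith

theorem isSubinvariantWeight_singletonCutWeight (hcA : letterInv c ∈ A) (hac : a ≠ c) (haA : a ∉ A)
    (huniq : ∀ l ∉ A, l ≠ c → l = a) (hm : (Fintype.card (X × Bool) : ℝ) = m + 3) :
    IsSubinvariantWeight (IsCutTransition c A) (m + 1) (singletonCutWeight c a m) := by
  have hac' : a ≠ letterInv c := fun h => haA (h ▸ hcA)
  have hm1 : 1 ≤ m := by linarith [four_le_card_of_ne_letterInv hac hac']
  have nonneg (y) : 0 ≤ singletonCutWeight c a m y :=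
    zero_le_one.trans (one_le_singletonCutWeight hac hm1 y)
  have hc_inv : singletonCutWeight c a m (letterInv c) = m * (m + 1) :=
    singletonCutWeight_of_ne (letterInv_ne_self c) hac'.symm (by simpa using hac.symm)
  refine ⟨one_le_singletonCutWeight hac hm1, fun x => ?_⟩
  rcases eq_or_ne x c with rfl | hxc
  · refine sum_filter_le_of_sum_le_add (S := {letterInv x}) nonneg
      (by simpa using not_isCutTransition_self_letterInv x) ?_
    rw [sum_singletonCutWeight hm, Finset.sum_singleton, hc_inv, singletonCutWeight_cut hac hac']
    nlinarith
  by_cases hxA : x ∈ A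
  · exact sum_singletonCutWeight_le_of_mem hm hac hac' haA hxc hxA
  · obtain rfl := huniq x hxA hxc
    have hsub : (Finset.univ.filter fun y => IsCutTransition c A x y) ⊆ {letterInv c} := by
      intro y hy
      obtain ⟨hyx, hy⟩ := (Finset.mem_filter.1 hy).2
      rw [Finset.mem_singleton, ← letterInv_eq_iff]
      by_contra hyc
      have hyA : letterInv y ∉ A := by tauto
      exact hyx (letterInv_eq_iff.1 (huniq _ hyA hyc))
    refine (Finset.sum_le_sum_of_subset_of_nonneg hsub fun y _ _ => nonneg y).trans ?_
    rw [Finset.sum_singleton, hc_inv, singletonCutWeight_self hac, mul_comm]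

theorem exists_isSubinvariantWeight (hA : ∃ a ∈ A, a ≠ c) (hA' : ∃ b ∉ A, b ≠ c) :
    ∃ f, IsSubinvariantWeight (IsCutTransition c A) (Fintype.card (X × Bool) - 2) f := by
  wlog hcA : letterInv c ∈ A generalizing A
  · simpa only [IsSubinvariantWeight, isCutTransition_compl] using
      this (A := Aᶜ) (by simpa using hA') (by simpa using hA) (by simpa using hcA)
  obtain ⟨a, haA, hac⟩ := hA'
  by_cases! huniq : ∀ l ∉ A, l ≠ c → l = a
  · have hrate : (Fintype.card (X × Bool) : ℝ) - 3 + 1 = Fintype.card (X × Bool) - 2 := by ring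
    exact ⟨_, hrate ▸ isSubinvariantWeight_singletonCutWeight hcA hac haA huniq
      (sub_add_cancel _ 3).symm⟩
  · obtain ⟨b, hbA, hbc, hba⟩ := huniq
    exact ⟨_, isSubinvariantWeight_of_notMem hcA hba.symm hac haA hbc hbA⟩

end CutWeight

section UpperBound

theorem sum_range_pow_mul_pow_le {r : ℝ} (hr : 2 ≤ r) (k : ℕ) :
    ∑ m ∈ Finset.range (k / 2 + 1), (r + 1) ^ m * r ^ (k - 2 * m) ≤ 4 * r ^ k := by
  have term_le (m) (hm : m ∈ Finset.range (k / 2 + 1)) :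
      (r + 1) ^ m * r ^ (k - 2 * m) ≤ (3 / 4) ^ m * r ^ k := by
    have hmk : 2 * m ≤ k := by
      rw [Finset.mem_range] at hm
      omega
    calc (r + 1) ^ m * r ^ (k - 2 * m) ≤ (3 / 4 * r ^ 2) ^ m * r ^ (k - 2 * m) :=
          mul_le_mul_of_nonneg_right (pow_le_pow_left₀ (by linarith) (by nlinarith) m)
            (pow_nonneg (by linarith) _)
      _ = (3 / 4) ^ m * r ^ k := by
          rw [mul_pow, mul_assoc, ← pow_mul, ← pow_add, Nat.add_sub_cancel' hmk]
  have geom_le : ∑ m ∈ Finset.range (k / 2 + 1), (3 / 4 : ℝ) ^ m ≤ 4 := by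
    have hpow : 0 ≤ (3 / 4 : ℝ) ^ (k / 2 + 1) := by positivity
    linarith [mul_neg_geom_sum (3 / 4 : ℝ) (k / 2 + 1)]
  calc _ ≤ ∑ m ∈ Finset.range (k / 2 + 1), (3 / 4 : ℝ) ^ m * r ^ k := Finset.sum_le_sum term_le
    _ = (∑ m ∈ Finset.range (k / 2 + 1), (3 / 4 : ℝ) ^ m) * r ^ k := by rw [Finset.sum_mul]
    _ ≤ 4 * r ^ k := mul_le_mul_of_nonneg_right geom_le (pow_nonneg (by linarith) k)

variable {X : Type*} [DecidableEq X]

theorem finite_setOf_norm_eq [Finite X] (k : ℕ) : {g : FreeGroup X | g.norm = k}.Finite :=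
  Set.Finite.of_finite_image ((List.finite_length_eq (X × Bool) k).subset (by
    rintro _ ⟨g, hg, rfl⟩
    exact hg)) FreeGroup.toWord_injective.injOn

theorem exists_conj_isCyclicallyReduced (g : FreeGroup X) :
    ∃ w h : FreeGroup X, FreeGroup.IsCyclicallyReduced h.toWord ∧ g = w * h * w⁻¹ ∧
      g.norm = 2 * w.norm + h.norm := by
  set p := FreeGroup.reduceCyclically.conjugator g.toWord
  set L := FreeGroup.reduceCyclically g.toWord
  have hsplit : p ++ L ++ FreeGroup.invRev p = g.toWord :=
    FreeGroup.reduceCyclically.conj_conjugator_reduceCyclically g.toWord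
  have hL : FreeGroup.IsCyclicallyReduced L :=
    FreeGroup.reduceCyclically.isCyclicallyReduced FreeGroup.isReduced_toWord
  have hp : FreeGroup.IsReduced p :=
    (hsplit ▸ FreeGroup.isReduced_toWord).infix (by
      rw [List.append_assoc]
      exact (List.prefix_append _ _).isInfix)
  have hpw : (FreeGroup.mk p).toWord = p := by rw [FreeGroup.toWord_mk, hp.reduce_eq]
  have hLw : (FreeGroup.mk L).toWord = L := by rw [FreeGroup.toWord_mk, hL.1.reduce_eq]
  refine ⟨FreeGroup.mk p, FreeGroup.mk L, by rwa [hLw], ?_, ?_⟩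
  · rw [FreeGroup.inv_mk, FreeGroup.mul_mk, FreeGroup.mul_mk, hsplit, FreeGroup.mk_toWord]
  · rw [FreeGroup.norm, FreeGroup.norm, FreeGroup.norm, hpw, hLw, ← hsplit]
    simp only [List.length_append, FreeGroup.invRev_length]
    ring

theorem ncard_isPrimitive_norm_eq_le [Finite X] (k : ℕ) :
    {g : FreeGroup X | IsPrimitive g ∧ g.norm = k}.ncard ≤
      ∑ m ∈ Finset.range (k / 2 + 1), {w : FreeGroup X | w.norm = m}.ncard *
        {h : FreeGroup X | IsPrimitive h ∧ FreeGroup.IsCyclicallyReduced h.toWord ∧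
          h.norm = k - 2 * m}.ncard := by
  set S : ℕ → Set (FreeGroup X) := fun m => {w | w.norm = m}
  set T : ℕ → Set (FreeGroup X) := fun m =>
    {h | IsPrimitive h ∧ FreeGroup.IsCyclicallyReduced h.toWord ∧ h.norm = m}
  set conj : FreeGroup X × FreeGroup X → FreeGroup X := fun p => p.1 * p.2 * p.1⁻¹
  have hST (m) : (S m ×ˢ T (k - 2 * m)).Finite := (finite_setOf_norm_eq m).prod
    ((finite_setOf_norm_eq (k - 2 * m)).subset fun h hh => hh.2.2)
  have hsub : {g : FreeGroup X | IsPrimitive g ∧ g.norm = k} ⊆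
      ⋃ m ∈ Finset.range (k / 2 + 1), conj '' (S m ×ˢ T (k - 2 * m)) := by
    rintro g ⟨hg, hk⟩
    obtain ⟨w, h, hcyc, rfl, hnorm⟩ := exists_conj_isCyclicallyReduced g
    have hh : IsPrimitive h := by simpa [mul_assoc] using hg.conj w⁻¹
    simp only [Set.mem_iUnion, Finset.mem_range]
    exact ⟨w.norm, by omega, (w, h), ⟨rfl, hh, hcyc, show h.norm = _ by omega⟩, rfl⟩
  calc _ ≤ (⋃ m ∈ Finset.range (k / 2 + 1), conj '' (S m ×ˢ T (k - 2 * m))).ncard :=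
        Set.ncard_le_ncard hsub (Finset.finite_toSet _ |>.biUnion fun m _ => (hST m).image conj)
    _ ≤ ∑ m ∈ Finset.range (k / 2 + 1), (conj '' (S m ×ˢ T (k - 2 * m))).ncard :=
        Finset.set_ncard_biUnion_le _ _
    _ ≤ ∑ m ∈ Finset.range (k / 2 + 1), (S m).ncard * (T (k - 2 * m)).ncard :=
        Finset.sum_le_sum fun m _ => (Set.ncard_image_le (hST m)).trans Set.ncard_prod.le

variable [Fintype X]

theorem exists_ncard_toWord_isChain_le {R : X × Bool → X × Bool → Prop} [DecidableRel R] {r : ℝ}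
    {f : X × Bool → ℝ} (hf : IsSubinvariantWeight R r f) (hr : 0 < r) :
    ∃ C : ℝ, 0 ≤ C ∧ ∀ k,
      ({g : FreeGroup X | g.norm = k ∧ g.toWord.IsChain R}.ncard : ℝ) ≤ C * r ^ k := by
  obtain ⟨C, hC0, hC⟩ := hf.exists_ncard_isChain_le hr
  refine ⟨C, hC0, fun k => (Nat.cast_le.2 ?_).trans (hC k)⟩
  exact Set.ncard_le_ncard_of_injOn FreeGroup.toWord (fun g hg => hg)
    FreeGroup.toWord_injective.injOn
    ((List.finite_length_eq (X × Bool) k).subset fun l hl => hl.1)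

theorem exists_ncard_norm_eq_le [Nontrivial X] :
    ∃ C : ℝ, 0 ≤ C ∧ ∀ k, ({g : FreeGroup X | g.norm = k}.ncard : ℝ) ≤
      C * (2 * Fintype.card X - 1) ^ k := by
  have hX : (2 : ℝ) ≤ Fintype.card X := by exact_mod_cast Fintype.one_lt_card (α := X)
  have hf : IsSubinvariantWeight (fun l m : X × Bool => m ≠ letterInv l)
      (2 * Fintype.card X - 1) 1 := by
    refine ⟨fun _ => le_rfl, fun x => ?_⟩
    refine sum_filter_le_of_sum_le_add (S := {letterInv x}) (fun _ => zero_le_one)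
      (by simp) (le_of_eq ?_)
    simp [mul_comm]
  obtain ⟨C, hC0, hC⟩ := exists_ncard_toWord_isChain_le hf (by linarith)
  refine ⟨C, hC0, fun k => le_trans (Nat.cast_le.2 (Set.ncard_le_ncard ?_ ?_)) (hC k)⟩
  · exact fun g hg => ⟨hg, FreeGroup.isReduced_toWord.imp fun _ _ h => ne_letterInv_iff.2 h⟩
  · exact (finite_setOf_norm_eq k).subset fun g hg => hg.1

theorem exists_ncard_isPrimitive_isCyclicallyReduced_le [Nontrivial X] :
    ∃ C : ℝ, 0 ≤ C ∧ ∀ k, ({g : FreeGroup X | IsPrimitive g ∧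
      FreeGroup.IsCyclicallyReduced g.toWord ∧ g.norm = k}.ncard : ℝ) ≤
        C * (2 * Fintype.card X - 2) ^ k := by
  have hX : (2 : ℝ) ≤ Fintype.card X := by exact_mod_cast Fintype.one_lt_card (α := X)
  let Cut := {p : (X × Bool) × Finset (X × Bool) // (∃ a ∈ p.2, a ≠ p.1) ∧ ∃ b ∉ p.2, b ≠ p.1}
  let S (p : Cut) (k : ℕ) : Set (FreeGroup X) :=
    {g | g.norm = k ∧ g.toWord.IsChain (IsCutTransition p.1.1 p.1.2)}
  have exists_le (p : Cut) :
      ∃ C : ℝ, 0 ≤ C ∧ ∀ k, ((S p k).ncard : ℝ) ≤ C * (2 * Fintype.card X - 2) ^ k := by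
    obtain ⟨f, hf⟩ := exists_isSubinvariantWeight p.2.1 p.2.2
    have hcard : (Fintype.card (X × Bool) : ℝ) = 2 * Fintype.card X := by simp [mul_comm]
    exact exists_ncard_toWord_isChain_le (hcard ▸ hf) (by linarith)
  choose C hC0 hC using exists_le
  refine ⟨∑ p, C p, Finset.sum_nonneg fun p _ => hC0 p, fun k => ?_⟩
  have hsub : {g : FreeGroup X | IsPrimitive g ∧ FreeGroup.IsCyclicallyReduced g.toWord ∧
      g.norm = k} ⊆ ⋃ p, S p k := by
    rintro g ⟨hg, hcyc, hk⟩
    obtain ⟨c, A, hA, hA', hchain⟩ := hg.exists_isChain_isCutTransition hcyc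
    exact Set.mem_iUnion.2 ⟨⟨(c, A), hA, hA'⟩, hk, hchain⟩
  have hfin : (⋃ p, S p k).Finite :=
    (finite_setOf_norm_eq k).subset (Set.iUnion_subset fun p g hg => hg.1)
  calc _ ≤ ((∑ p, (S p k).ncard : ℕ) : ℝ) :=
        Nat.cast_le.2 ((Set.ncard_le_ncard hsub hfin).trans (Set.ncard_iUnion_le_of_fintype _))
    _ ≤ ∑ p, C p * (2 * Fintype.card X - 2) ^ k := by
        push_cast
        exact Finset.sum_le_sum fun p _ => hC p k
    _ = (∑ p, C p) * (2 * Fintype.card X - 2) ^ k := by rw [Finset.sum_mul]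

theorem exists_ncard_isPrimitive_le [Nontrivial X] :
    ∃ C : ℝ, 0 < C ∧ ∀ k, ({g : FreeGroup X | IsPrimitive g ∧ g.norm = k}.ncard : ℝ) ≤
      C * (2 * Fintype.card X - 2) ^ k := by
  have hX : (2 : ℝ) ≤ Fintype.card X := by exact_mod_cast Fintype.one_lt_card (α := X)
  obtain ⟨C, hC0, hC⟩ := exists_ncard_norm_eq_le (X := X)
  obtain ⟨D, hD0, hD⟩ := exists_ncard_isPrimitive_isCyclicallyReduced_le (X := X)
  set r : ℝ := 2 * Fintype.card X - 2 with hr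
  rw [show 2 * (Fintype.card X : ℝ) - 1 = r + 1 by ring] at hC
  have hr2 : 2 ≤ r := by linarith
  refine ⟨C * D * 4 + 1, by positivity, fun k => ?_⟩
  calc _ ≤ ∑ m ∈ Finset.range (k / 2 + 1), C * (r + 1) ^ m * (D * r ^ (k - 2 * m)) := by
        refine (Nat.cast_le.2 (ncard_isPrimitive_norm_eq_le k)).trans ?_
        push_cast
        gcongr with m
        exacts [hC m, hD _]
    _ = C * D * ∑ m ∈ Finset.range (k / 2 + 1), (r + 1) ^ m * r ^ (k - 2 * m) := by
        rw [Finset.mul_sum]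
        exact Finset.sum_congr rfl fun m _ => by ring
    _ ≤ C * D * (4 * r ^ k) := by gcongr; exact sum_range_pow_mul_pow_le hr2 k
    _ ≤ (C * D * 4 + 1) * r ^ k := by
        have : 0 ≤ r ^ k := by positivity
        linarith

end UpperBound

section LowerBound

variable {X : Type*}

section Transvection

variable [DecidableEq X]

/-- The endomorphism of the free group which multiplies the generator `x` by `w` on the right and
fixes the other generators. It is an automorphism when `w` does not involve `x`. -/
def rightTransvection (x : X) (w : FreeGroup X) : FreeGroup X →* FreeGroup X :=
  FreeGroup.lift (Function.update FreeGroup.of x (FreeGroup.of x * w))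

theorem rightTransvection_of_self (x : X) (w : FreeGroup X) :
    rightTransvection x w (FreeGroup.of x) = FreeGroup.of x * w := by
  simp [rightTransvection]

theorem rightTransvection_of_ne {x y : X} (hy : y ≠ x) (w : FreeGroup X) :
    rightTransvection x w (FreeGroup.of y) = FreeGroup.of y := by
  simp [rightTransvection, hy]

theorem rightTransvection_eq_self {x : X} {v : FreeGroup X}
    (hv : v ∈ Subgroup.closure (FreeGroup.of '' {x}ᶜ)) (w : FreeGroup X) :
    rightTransvection x w v = v := by
  refine MonoidHom.eqOn_closure (g := MonoidHom.id _) ?_ hv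
  rintro _ ⟨y, hy, rfl⟩
  exact rightTransvection_of_ne hy w

theorem rightTransvection_comp_inv {x : X} {w : FreeGroup X}
    (hw : w ∈ Subgroup.closure (FreeGroup.of '' {x}ᶜ)) :
    (rightTransvection x w).comp (rightTransvection x w⁻¹) = MonoidHom.id _ := by
  ext y
  rcases eq_or_ne y x with rfl | hy
  · simp [rightTransvection_of_self, rightTransvection_eq_self hw]
  · simp [rightTransvection_of_ne hy]

end Transvection

theorem isPrimitive_mul_of_mem_closure {x : X} {w : FreeGroup X}
    (hw : w ∈ Subgroup.closure (FreeGroup.of '' {x}ᶜ)) : IsPrimitive (FreeGroup.of x * w) := by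
  classical
  have hcomp := rightTransvection_comp_inv (inv_mem hw)
  rw [inv_inv] at hcomp
  rw [← rightTransvection_of_self]
  exact .of_mulEquiv (MonoidHom.toMulEquiv _ _ hcomp (rightTransvection_comp_inv hw)) x

theorem mk_mem_closure_of_forall_ne {x : X} {L : List (X × Bool)} (hL : ∀ l ∈ L, l.1 ≠ x) :
    FreeGroup.mk L ∈ Subgroup.closure (FreeGroup.of '' {x}ᶜ) := by
  induction L with
  | nil => exact one_mem _
  | cons l L ih =>
    rw [← List.singleton_append, ← FreeGroup.mul_mk]
    refine mul_mem ?_ (ih fun m hm => hL m (List.mem_cons_of_mem l hm))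
    obtain ⟨y, b⟩ := l
    have hy : FreeGroup.of y ∈ Subgroup.closure (FreeGroup.of '' {x}ᶜ) :=
      Subgroup.subset_closure ⟨y, hL _ List.mem_cons_self, rfl⟩
    cases b
    · simpa [FreeGroup.of, FreeGroup.invRev] using inv_mem hy
    · exact hy

/-- The transitions from a letter to a letter in reduced words in which the generator `x` can
only occur in the first letter. -/
def IsAvoidingTransition (x : X) (l m : X × Bool) : Prop :=
  m.1 ≠ x ∧ m ≠ letterInv l

theorem forall_ne_of_isChain_isAvoidingTransition {x : X} {l : X × Bool} {L : List (X × Bool)}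
    (hL : (l :: L).IsChain (IsAvoidingTransition x)) : ∀ m ∈ L, m.1 ≠ x := by
  induction L generalizing l with
  | nil => simp
  | cons m L ih =>
    obtain ⟨hm, hL⟩ := List.isChain_cons_cons.1 hL
    exact List.forall_mem_cons.2 ⟨hm.1, ih hL⟩

variable [DecidableEq X]

instance (x : X) : DecidableRel (IsAvoidingTransition x) :=
  fun _ _ => inferInstanceAs (Decidable (_ ∧ _))

theorem le_card_isAvoidingTransition [Fintype X] (x : X) (l : X × Bool) :
    2 * Fintype.card X - 3 ≤ (Finset.univ.filter (IsAvoidingTransition x l)).card := by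
  have hsub : ({(x, true), (x, false), letterInv l} : Finset (X × Bool))ᶜ ⊆
      Finset.univ.filter (IsAvoidingTransition x l) := by
    rintro ⟨y, b⟩ hm
    simp only [Finset.mem_compl, Finset.mem_insert, Finset.mem_singleton, not_or] at hm
    refine Finset.mem_filter.2 ⟨Finset.mem_univ _, ?_, hm.2.2⟩
    rintro rfl
    cases b
    exacts [hm.2.1 rfl, hm.1 rfl]
  refine le_trans ?_ (Finset.card_le_card hsub)
  rw [Finset.card_compl, Fintype.card_prod, Fintype.card_bool, mul_comm]
  exact Nat.sub_le_sub_left Finset.card_le_three _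

theorem pow_le_ncard_isPrimitive [Fintype X] (x : X) (k : ℕ) :
    (2 * Fintype.card X - 3) ^ k ≤
      {g : FreeGroup X | IsPrimitive g ∧ g.norm = k + 1}.ncard := by
  have toWord_mk {L} (hL : L ∈ chainsFrom (IsAvoidingTransition x) k (x, true)) :
      (FreeGroup.mk ((x, true) :: L)).toWord = (x, true) :: L := by
    have hred : FreeGroup.IsReduced ((x, true) :: L) :=
      (mem_chainsFrom.1 hL).2.imp fun _ _ h => ne_letterInv_iff.1 h.2
    rw [FreeGroup.toWord_mk, hred.reduce_eq]
  refine (pow_le_card_chainsFrom (le_card_isAvoidingTransition x) k (x, true)).trans ?_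
  rw [← Set.ncard_coe_finset]
  refine Set.ncard_le_ncard_of_injOn (fun L => FreeGroup.mk ((x, true) :: L)) ?_ ?_
    ((finite_setOf_norm_eq (k + 1)).subset fun g hg => hg.2)
  · intro L hL
    obtain ⟨hlen, hchain⟩ := mem_chainsFrom.1 hL
    refine ⟨?_, ?_⟩
    · exact isPrimitive_mul_of_mem_closure
        (mk_mem_closure_of_forall_ne (forall_ne_of_isChain_isAvoidingTransition hchain))
    · rw [FreeGroup.norm, toWord_mk hL, List.length_cons, hlen]
  · intro L hL L' hL' h
    have hword : (x, true) :: L = (x, true) :: L' := by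
      rw [← toWord_mk hL, ← toWord_mk hL']
      exact congrArg FreeGroup.toWord h
    exact (List.cons.inj hword).2

end LowerBound

theorem card_primitive_freeGroup_bounds_general {X : Type*} [Fintype X] [DecidableEq X]
    [Nontrivial X] :
    ∃ c₁ c₂ : ℝ, 0 < c₁ ∧ 0 < c₂ ∧ ∀ k : ℕ, 1 ≤ k →
      c₁ * (2 * (Fintype.card X : ℝ) - 3) ^ k ≤
        ({g : FreeGroup X | IsPrimitive g ∧ g.norm = k}.ncard : ℝ) ∧
      ({g : FreeGroup X | IsPrimitive g ∧ g.norm = k}.ncard : ℝ) ≤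
        c₂ * (2 * (Fintype.card X : ℝ) - 2) ^ k := by
  obtain ⟨C, hC0, hC⟩ := exists_ncard_isPrimitive_le (X := X)
  obtain ⟨x⟩ : Nonempty X := inferInstance
  have hX : 2 ≤ Fintype.card X := Fintype.one_lt_card
  have hcast : ((2 * Fintype.card X - 3 : ℕ) : ℝ) = 2 * Fintype.card X - 3 := by
    rw [Nat.cast_sub (by omega)]
    push_cast
    rfl
  have hpos : (0 : ℝ) < 2 * Fintype.card X - 3 := by
    rw [← hcast, Nat.cast_pos]
    omega
  refine ⟨(2 * (Fintype.card X : ℝ) - 3)⁻¹, C, inv_pos.2 hpos, hC0, fun k hk => ⟨?_, hC k⟩⟩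
  obtain ⟨k, rfl⟩ := Nat.exists_eq_add_of_le' hk
  rw [pow_succ', inv_mul_cancel_left₀ hpos.ne', ← hcast]
  exact_mod_cast pow_le_ncard_isPrimitive x k

/-- For `q ≥ 3`, the number `P(q,k)` of primitive elements of free length `k` of the
free group of rank `q` satisfies `c₁·(2q−3)^k ≤ P(q,k) ≤ c₂·(2q−2)^k` for some
constants `c₁, c₂ > 0` and all `k ≥ 1`. -/
theorem card_primitive_freeGroup_bounds (q : ℕ) (hq : 3 ≤ q) :
    ∃ c₁ c₂ : ℝ, 0 < c₁ ∧ 0 < c₂ ∧ ∀ k : ℕ, 1 ≤ k →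
      c₁ * ((2 * (q : ℝ) - 3) ^ k) ≤
        ({g : FreeGroup (Fin q) | IsPrimitive g ∧ g.norm = k}.ncard : ℝ) ∧
      ({g : FreeGroup (Fin q) | IsPrimitive g ∧ g.norm = k}.ncard : ℝ) ≤
        c₂ * ((2 * (q : ℝ) - 2) ^ k) := by
  have : Nontrivial (Fin q) := Fin.nontrivial_iff_two_le.2 (by omega)
  simpa using card_primitive_freeGroup_bounds_general (X := Fin q)
end
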